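/- arXiv:2102.02280 — 3 statements merged into one kernel-verified Lean document; each statement's English description precedes it below -/
import Mathlib

section
/- Let t > 0, let (a_p) be positive real numbers and (θ_p) real numbers in [0,2π) indexed by the primes, and let X_t(τ) = ∑_{p ≤ t, p prime} a_p e^{i(τ log p + θ_p)}. Then for every real λ, lim_{T→∞} (1/T) ∫_T^{2T} exp(i λ Im X_t(τ)) dτ = ∏_{p ≤ t, p prime} ( (1/(2π)) ∫_0^{2π} exp(i a_p λ sin φ) dφ ); that is, the characteristic function of Im X_t factorizes as the product of the characteristic functions of its individual summands, so the summands are statistically independent. -/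
open MeasureTheory Filter Real

/-- The set of primes `p ≤ t`. -/
noncomputable def primesUpTo (t : ℝ) : Finset ℕ :=
  (Finset.range (⌊t⌋₊ + 1)).filter Nat.Prime

/-- The finite prime Dirichlet series `X_t(τ) = ∑_{p ≤ t} a_p e^{i(τ log p + θ_p)}`. -/
noncomputable def primeDirichletX (t : ℝ) (a θ : ℕ → ℝ) (τ : ℝ) : ℂ :=
  ∑ p ∈ primesUpTo t, (a p : ℂ) * Complex.exp (Complex.I * ((τ * Real.log p + θ p : ℝ) : ℂ))

/-- `J₀(x) = (1/(2π)) ∫_0^{2π} e^{i x sin φ} dφ`, the characteristic function of a single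
summand `a_p sin(τ log p + θ_p)` at `λ = 1` scaling, i.e. the zeroth Bessel function. -/
noncomputable def besselJ0 (x : ℝ) : ℂ :=
  (1 / (2 * (π : ℂ))) * ∫ φ in (0:ℝ)..(2 * π), Complex.exp (Complex.I * ((x * Real.sin φ : ℝ) : ℂ))

lemma aux_sum_log (s : Finset ℕ) (hs : ∀ p ∈ s, p.Prime) (n : s → ℤ)
    (h : ∑ p : s, (n p : ℝ) * Real.log (p : ℕ) = 0) : n = 0 := by
  have h1 : ∏ p : s, (((p : ℕ) : ℚ)) ^ (n p) = 1 := by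
    have h2 : (∏ p : s, (((p : ℕ) : ℝ)) ^ (n p)) = 1 := by
      have hpos : 0 < ∏ p : s, (((p : ℕ) : ℝ)) ^ (n p) :=
        Finset.prod_pos fun p _ => zpow_pos (by exact_mod_cast (hs p p.2).pos) _
      apply Real.eq_one_of_pos_of_log_eq_zero hpos
      rw [Real.log_prod]
      · simpa [Real.log_zpow] using h
      · intro p _
        exact (zpow_pos (by exact_mod_cast (hs p p.2).pos) _).ne'
    have h4 : ((∏ p : s, (((p : ℕ) : ℚ)) ^ (n p) : ℚ) : ℝ) = 1 := by
      push_cast; exact h2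
    exact_mod_cast h4
  funext q
  have : Fact (q : ℕ).Prime := ⟨hs q q.2⟩
  have hval : ∀ t : Finset s, padicValRat q (∏ p ∈ t, (((p : ℕ) : ℚ)) ^ (n p))
      = ∑ p ∈ t, n p * padicValRat q ((p : ℕ) : ℚ) := by
    intro t
    induction t using Finset.cons_induction with
    | empty => simp
    | cons b t hb ih =>
      have hne : ∀ p : s, (((p : ℕ) : ℚ)) ^ (n p) ≠ 0 := fun p =>
        zpow_ne_zero _ (by exact_mod_cast (hs p p.2).ne_zero)
      rw [Finset.prod_cons, Finset.sum_cons, padicValRat.mul (hne b)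
        (Finset.prod_ne_zero_iff.2 fun p _ => hne p), ih, padicValRat.zpow]
  have h3 := hval Finset.univ
  rw [h1, padicValRat.one, Finset.sum_eq_single q] at h3
  · simpa [padicValRat.self (hs q q.2).one_lt] using h3.symm
  · intro b _ hb
    have : Fact (b : ℕ).Prime := ⟨hs b b.2⟩
    rw [padicValRat.of_nat, padicValNat_primes]
    · simp
    · intro h; exact hb (Subtype.ext h.symm)
  · simp

lemma aux_exp_avg (ω : ℝ) (hω : ω ≠ 0) :
    Tendsto (fun T : ℝ => (1 / T : ℂ) * ∫ τ in T..(2 * T), Complex.exp (Complex.I * ω * τ))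
      atTop (nhds 0) := by
  have hc : Complex.I * (ω : ℂ) ≠ 0 := mul_ne_zero Complex.I_ne_zero (by exact_mod_cast hω)
  have hb : Tendsto (fun T : ℝ => T⁻¹ * (2 / |ω|)) atTop (nhds 0) := by
    simpa using tendsto_inv_atTop_zero.mul_const (2 / |ω|)
  refine squeeze_zero_norm' ?_ hb
  filter_upwards [eventually_gt_atTop 0] with T hT
  rw [integral_exp_mul_complex hc, norm_mul, norm_div, norm_div, norm_mul]
  have e : ∀ x : ℝ, ‖Complex.exp (Complex.I * ω * x)‖ = 1 := by
    intro x
    have : Complex.I * ω * x = ((ω * x : ℝ) : ℂ) * Complex.I := by push_cast; ring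
    rw [this, Complex.norm_exp_ofReal_mul_I]
  have h1 := norm_sub_le (Complex.exp (Complex.I * ω * ((2 * T : ℝ) : ℂ)))
    (Complex.exp (Complex.I * ω * (T : ℂ)))
  rw [e, e] at h1
  simp only [norm_one, Complex.norm_real, Complex.norm_I, Real.norm_eq_abs, abs_of_pos hT, one_mul,
    one_div]
  gcongr
  linarith

lemma aux_fourier_int (n : ℤ) (hn : n ≠ 0) : ∫ x : UnitAddCircle, fourier n x = 0 := by
  rw [← UnitAddCircle.intervalIntegral_preimage 0]
  simp only [fourier_coe_apply]
  have hc : 2 * (π : ℂ) * Complex.I * n ≠ 0 := by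
    simp [hn, Real.pi_ne_zero]
  have h := integral_exp_mul_complex (a := 0) (b := 0 + 1) hc
  simp only [Complex.ofReal_one, div_one]
  rw [h]
  have : Complex.exp (2 * (π : ℂ) * Complex.I * n) = 1 := by
    rw [mul_comm]; exact Complex.exp_int_mul_two_pi_mul_I n
  simp [this]

noncomputable def auxPath (s : Finset ℕ) (θ : ℕ → ℝ) (τ : ℝ) : s → UnitAddCircle :=
  fun p => (((τ * Real.log (p : ℕ) + θ p) / (2 * π) : ℝ) : UnitAddCircle)

lemma auxPath_cont (s : Finset ℕ) (θ : ℕ → ℝ) : Continuous (auxPath s θ) := by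
  unfold auxPath
  refine continuous_pi fun p => (AddCircle.continuous_mk' 1).comp ?_
  fun_prop

lemma aux_fourier_path (s : Finset ℕ) (θ : ℕ → ℝ) (τ : ℝ) (p : s) (n : ℤ) :
    fourier n (auxPath s θ τ p) =
      Complex.exp (Complex.I * ((n * (τ * Real.log (p : ℕ) + θ p) : ℝ) : ℂ)) := by
  unfold auxPath
  rw [fourier_coe_apply]
  congr 1
  have : (π : ℂ) ≠ 0 := by exact_mod_cast Real.pi_ne_zero
  push_cast
  field_simp

lemma aux_vol (s : Finset ℕ) : (volume : Measure (s → UnitAddCircle)).real Set.univ = 1 := by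
  rw [measureReal_def, volume_pi, Measure.pi_univ]
  simp [UnitAddCircle.measure_univ]

lemma aux_monomial (s : Finset ℕ) (hs : ∀ p ∈ s, p.Prime) (θ : ℕ → ℝ) (n : s → ℤ) :
    Tendsto (fun T : ℝ => (1 / T : ℂ) *
      ∫ τ in T..(2 * T), UnitAddTorus.mFourier n (auxPath s θ τ)) atTop
      (nhds (∫ x : s → UnitAddCircle, UnitAddTorus.mFourier n x)) := by
  by_cases hn : n = 0
  · subst hn
    simp only [UnitAddTorus.mFourier_zero, ContinuousMap.one_apply]
    refine tendsto_const_nhds.congr' ?_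
    filter_upwards [eventually_gt_atTop 0] with T hT
    have : (T : ℂ) ≠ 0 := by exact_mod_cast hT.ne'
    simp [aux_vol]
    field_simp
    ring
  · have hR : ∫ x : s → UnitAddCircle, UnitAddTorus.mFourier n x = 0 := by
      simp only [UnitAddTorus.mFourier, ContinuousMap.coe_mk]
      rw [MeasureTheory.integral_fintype_prod_volume_eq_prod
        (f := fun i (x : UnitAddCircle) => fourier (n i) x)]
      obtain ⟨q, hq⟩ := Function.ne_iff.1 hn
      exact Finset.prod_eq_zero (Finset.mem_univ q) (aux_fourier_int _ hq)
    rw [hR]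
    have hω : ∑ p : s, (n p : ℝ) * Real.log (p : ℕ) ≠ 0 := fun h => hn (aux_sum_log s hs n h)
    have h := (aux_exp_avg _ hω).const_mul
      (Complex.exp (Complex.I * ((∑ p : s, (n p : ℝ) * θ p : ℝ) : ℂ)))
    rw [mul_zero] at h
    refine h.congr fun T => ?_
    rw [mul_left_comm, ← intervalIntegral.integral_const_mul]
    congr 1
    refine intervalIntegral.integral_congr fun τ _ => ?_
    simp only [UnitAddTorus.mFourier, ContinuousMap.coe_mk, aux_fourier_path]
    rw [← Complex.exp_add, ← Complex.exp_sum]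
    congr 1
    push_cast
    simp only [Finset.mul_sum, Finset.sum_mul, ← Finset.sum_add_distrib]
    refine Finset.sum_congr rfl fun p _ => ?_
    ring

lemma aux_equi (s : Finset ℕ) (hs : ∀ p ∈ s, p.Prime) (θ : ℕ → ℝ)
    (f : C(s → UnitAddCircle, ℂ)) :
    Tendsto (fun T : ℝ => (1 / T : ℂ) * ∫ τ in T..(2 * T), f (auxPath s θ τ)) atTop
      (nhds (∫ x : s → UnitAddCircle, f x)) := by
  have hint : ∀ (g : C(s → UnitAddCircle, ℂ)) (a b : ℝ),
      IntervalIntegrable (fun τ => g (auxPath s θ τ)) volume a b := fun g a b =>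
    (g.continuous.comp (auxPath_cont s θ)).intervalIntegrable a b
  have hint2 : ∀ (g : C(s → UnitAddCircle, ℂ)), Integrable (fun x => g x) := fun g =>
    g.continuous.integrable_of_hasCompactSupport (HasCompactSupport.of_compactSpace _)
  have hspan : ∀ g ∈ Submodule.span ℂ (Set.range (UnitAddTorus.mFourier (d := s))),
      Tendsto (fun T : ℝ => (1 / T : ℂ) * ∫ τ in T..(2 * T), g (auxPath s θ τ)) atTop
      (nhds (∫ x : s → UnitAddCircle, g x)) := by
    intro g hg
    induction hg using Submodule.span_induction with
    | mem g hg => obtain ⟨n, rfl⟩ := hg; exact aux_monomial s hs θ n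
    | zero => simp
    | add g h _ _ hg hh =>
      simp only [ContinuousMap.add_apply]
      rw [integral_add (hint2 g) (hint2 h)]
      refine (hg.add hh).congr fun T => ?_
      rw [intervalIntegral.integral_add (hint g _ _) (hint h _ _), mul_add]
    | smul c g _ hg =>
      simp only [ContinuousMap.smul_apply, smul_eq_mul]
      rw [MeasureTheory.integral_const_mul]
      refine (hg.const_mul c).congr fun T => ?_
      rw [intervalIntegral.integral_const_mul, mul_left_comm]
  have hf : f ∈ (Submodule.span ℂ
      (Set.range (UnitAddTorus.mFourier (d := s)))).topologicalClosure := by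
    rw [UnitAddTorus.span_mFourier_closure_eq_top]; trivial
  rw [← SetLike.mem_coe, Submodule.topologicalClosure_coe, Metric.mem_closure_iff] at hf
  rw [Metric.tendsto_nhds]
  intro ε hε
  obtain ⟨g, hg, hfg⟩ := hf (ε / 3) (by positivity)
  have hpt : ∀ x, ‖f x - g x‖ ≤ ε / 3 := fun x => by
    rw [← dist_eq_norm]
    exact (ContinuousMap.dist_apply_le_dist x).trans hfg.le
  filter_upwards [Metric.tendsto_nhds.1 (hspan g hg) (ε / 3) (by positivity),
    eventually_gt_atTop 0] with T hT hT0
  have h1 : dist ((1 / T : ℂ) * ∫ τ in T..(2 * T), f (auxPath s θ τ))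
      ((1 / T : ℂ) * ∫ τ in T..(2 * T), g (auxPath s θ τ)) ≤ ε / 3 := by
    rw [dist_eq_norm, ← mul_sub, ← intervalIntegral.integral_sub (hint f _ _) (hint g _ _),
      norm_mul]
    have := intervalIntegral.norm_integral_le_of_norm_le_const (a := T) (b := 2 * T)
      (f := fun τ => f (auxPath s θ τ) - g (auxPath s θ τ)) (C := ε / 3) (fun x _ => hpt _)
    have e : |2 * T - T| = T := by rw [abs_of_pos] <;> linarith
    rw [e] at this
    have e2 : ‖(1 / T : ℂ)‖ = 1 / T := by
      simp [abs_of_pos hT0]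
    rw [e2]
    calc _ ≤ 1 / T * (ε / 3 * T) := by gcongr
      _ = ε / 3 := by field_simp
  have h2 : dist (∫ x, g x) (∫ x : s → UnitAddCircle, f x) ≤ ε / 3 := by
    rw [dist_comm, dist_eq_norm, ← integral_sub (hint2 f) (hint2 g)]
    have := MeasureTheory.norm_integral_le_of_norm_le_const
      (μ := (volume : Measure (s → UnitAddCircle))) (f := fun x => f x - g x)
      (Eventually.of_forall hpt)
    rw [aux_vol, mul_one] at this
    exact this
  have h3 := dist_triangle4 ((1 / T : ℂ) * ∫ τ in T..(2 * T), f (auxPath s θ τ))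
      ((1 / T : ℂ) * ∫ τ in T..(2 * T), g (auxPath s θ τ)) (∫ x : s → UnitAddCircle, g x)
      (∫ x : s → UnitAddCircle, f x)
  linarith

lemma aux_bessel (c : ℝ) :
    ∫ x : UnitAddCircle, Complex.exp (Complex.I * ((c * (fourier 1 x).im : ℝ) : ℂ))
      = besselJ0 c := by
  rw [← UnitAddCircle.intervalIntegral_preimage 0, besselJ0]
  have h := intervalIntegral.integral_comp_mul_left (a := 0) (b := 0 + 1) (c := 2 * π)
    (fun φ => Complex.exp (Complex.I * ((c * Real.sin φ : ℝ) : ℂ))) (by positivity)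
  have e : ∀ x : ℝ, (fourier 1 (x : UnitAddCircle)).im = Real.sin (2 * π * x) := by
    intro x
    rw [fourier_coe_apply]
    have : 2 * (π : ℂ) * Complex.I * ((1 : ℤ) : ℂ) * x / ((1 : ℝ) : ℂ)
      = ((2 * π * x : ℝ) : ℂ) * Complex.I := by push_cast; ring
    rw [this, Complex.exp_ofReal_mul_I_im]
  simp only [e]
  rw [h]
  simp

theorem stmt2 (t : ℝ) (ht : 0 < t) (a θ : ℕ → ℝ)
    (ha : ∀ p, p.Prime → 0 < a p)
    (hθ : ∀ p, θ p ∈ Set.Ico (0 : ℝ) (2 * π)) (lam : ℝ) :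
    Tendsto
      (fun T : ℝ => (1 / T) *
        ∫ τ in T..(2 * T), Complex.exp (Complex.I * ((lam * (primeDirichletX t a θ τ).im : ℝ) : ℂ)))
      atTop
      (nhds (∏ p ∈ primesUpTo t, besselJ0 (a p * lam))) := by
  have hs : ∀ p ∈ primesUpTo t, p.Prime := fun p hp => (Finset.mem_filter.1 hp).2
  let f : C(primesUpTo t → UnitAddCircle, ℂ) :=
    ⟨fun x => ∏ p : primesUpTo t,
      Complex.exp (Complex.I * ((a p * lam * (fourier 1 (x p)).im : ℝ) : ℂ)), by
      refine continuous_finsetProd _ fun p _ => ?_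
      have h1 : Continuous fun x : primesUpTo t → UnitAddCircle => fourier 1 (x p) :=
        (fourier 1).continuous.comp (continuous_apply p)
      have h2 := Complex.continuous_im.comp h1
      exact Complex.continuous_exp.comp (continuous_const.mul
        (Complex.continuous_ofReal.comp (continuous_const.mul h2)))⟩
  have h := aux_equi (primesUpTo t) hs θ f
  have hI : ∫ x, f x = ∏ p ∈ primesUpTo t, besselJ0 (a p * lam) := by
    simp only [f, ContinuousMap.coe_mk]
    rw [MeasureTheory.integral_fintype_prod_volume_eq_prod
      (f := fun (p : primesUpTo t) (x : UnitAddCircle) =>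
        Complex.exp (Complex.I * ((a p * lam * (fourier 1 x).im : ℝ) : ℂ)))]
    simp only [aux_bessel]
    exact Finset.prod_coe_sort (primesUpTo t) (fun p => besselJ0 (a p * lam))
  rw [hI] at h
  refine h.congr fun T => ?_
  congr 1
  refine intervalIntegral.integral_congr fun τ _ => ?_
  simp only [f, ContinuousMap.coe_mk, aux_fourier_path]
  rw [← Complex.exp_sum, ← Finset.mul_sum, ← Complex.ofReal_sum]
  congr 3
  rw [primeDirichletX, Complex.im_sum, Finset.mul_sum, ← Finset.sum_coe_sort (primesUpTo t)]
  refine Finset.sum_congr rfl fun p _ => ?_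
  rw [Complex.im_ofReal_mul]
  simp only [Int.cast_one, one_mul]
  ring
end

section
/- For t > 0 let P_t(1/2+iτ) = ∑_{p ≤ t, p prime} p^{-(1/2+iτ)}. Then for every real x, lim_{t→∞} lim_{T→∞} (1/T) · Leb{ τ ∈ [T,2T] : Re P_t(1/2+iτ) ≤ x · √( (1/2) log log t ) } = Φ(x), where Φ(x) = (1/√(2π)) ∫_{-∞}^x e^{-u²/2} du is the standard normal distribution function; that is, Re P_t(1/2+iτ) / √((1/2) log log t) converges in distribution to a standard normal random variable. -/
open MeasureTheory Filter Real

/-- The truncated prime zeta function `P_t(1/2 + iτ) = ∑_{p ≤ t} p^{-(1/2+iτ)}`. -/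
noncomputable def primeZetaTrunc (t : ℝ) (τ : ℝ) : ℂ :=
  ∑ p ∈ primesUpTo t, (p : ℂ) ^ (-(1 / 2 + Complex.I * (τ : ℂ)))

/-- The standard normal distribution function `Φ(x)`. -/
noncomputable def stdNormalCDF (x : ℝ) : ℝ :=
  (1 / Real.sqrt (2 * π)) * ∫ u in Set.Iic x, Real.exp (-u ^ 2 / 2)

lemma pz_log_factorial (N : ℕ) :
    Real.log (N.factorial : ℝ) = ∑ n ∈ Finset.Ioc 0 N, Real.log n := by
  induction N with
  | zero => simp
  | succ k ih =>
    rw [Finset.sum_Ioc_succ_top (by omega), ← ih, Nat.factorial_succ]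
    push_cast
    rw [Real.log_mul (by positivity) (by positivity)]
    ring

lemma pz_vonMangoldt (N : ℕ) :
    Real.log (N.factorial : ℝ) =
      ∑ n ∈ Finset.Ioc 0 N, ArithmeticFunction.vonMangoldt n * ((N / n : ℕ) : ℝ) := by
  rw [← ArithmeticFunction.sum_Ioc_mul_zeta_eq_sum, ArithmeticFunction.vonMangoldt_mul_zeta,
    pz_log_factorial]
  rfl

lemma pz_mertens_vonMangoldt (N : ℕ) (hN : 1 ≤ N) :
    Real.log N - 1 ≤ ∑ n ∈ Finset.Ioc 0 N, ArithmeticFunction.vonMangoldt n / n ∧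
    ∑ n ∈ Finset.Ioc 0 N, ArithmeticFunction.vonMangoldt n / n ≤
      Real.log N + (Real.log 4 + 4) := by
  have hN0 : (0 : ℝ) < N := by exact_mod_cast hN
  have h1 : Real.log (N.factorial : ℝ) ≤
      N * ∑ n ∈ Finset.Ioc 0 N, ArithmeticFunction.vonMangoldt n / n := by
    rw [pz_vonMangoldt, Finset.mul_sum]
    refine Finset.sum_le_sum fun n hn => ?_
    have : ((N / n : ℕ) : ℝ) ≤ (N : ℝ) / n := Nat.cast_div_le
    calc _ ≤ ArithmeticFunction.vonMangoldt n * ((N : ℝ) / n) :=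
          mul_le_mul_of_nonneg_left this ArithmeticFunction.vonMangoldt_nonneg
      _ = _ := by ring
  have h2 : N * ∑ n ∈ Finset.Ioc 0 N, ArithmeticFunction.vonMangoldt n / n ≤
      Real.log (N.factorial : ℝ) + Chebyshev.psi N := by
    rw [pz_vonMangoldt, Finset.mul_sum, Chebyshev.psi, Nat.floor_natCast,
      ← Finset.sum_add_distrib]
    refine Finset.sum_le_sum fun n hn => ?_
    have hn0 : 0 < n := (Finset.mem_Ioc.1 hn).1
    have : (N : ℝ) / n ≤ ((N / n : ℕ) : ℝ) + 1 := by
      rw [div_le_iff₀ (by exact_mod_cast hn0)]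
      have := Nat.lt_div_mul_add (a := N) hn0
      have h3 : N ≤ (N / n + 1) * n := by nlinarith
      exact_mod_cast h3
    calc _ = ArithmeticFunction.vonMangoldt n * ((N : ℝ) / n) := by ring
      _ ≤ ArithmeticFunction.vonMangoldt n * (((N / n : ℕ) : ℝ) + 1) :=
          mul_le_mul_of_nonneg_left this ArithmeticFunction.vonMangoldt_nonneg
      _ = _ := by ring
  have h3 := Chebyshev.psi_le_const_mul_self hN0.le
  have h4 : Real.log (N.factorial : ℝ) ≤ N * Real.log N := by
    rw [← Real.log_pow]
    exact Real.log_le_log (by positivity) (by exact_mod_cast Nat.factorial_le_pow N)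
  have h5 := Stirling.le_log_factorial_stirling (n := N) (by omega)
  have h6 : 0 ≤ Real.log N := Real.log_natCast_nonneg N
  have h7 : 0 ≤ Real.log (2 * π) := Real.log_nonneg (by linarith [Real.pi_gt_three])
  constructor
  · refine le_of_mul_le_mul_left ?_ hN0
    linarith
  · refine le_of_mul_le_mul_left ?_ hN0
    linarith

/-- Mertens' first theorem. -/
lemma pz_mertens_one : ∃ C : ℝ, 0 ≤ C ∧ ∀ N : ℕ, 1 ≤ N →
    |(∑ n ∈ Finset.Icc 0 N, if n.Prime then Real.log n / n else 0) - Real.log N| ≤ C := by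
  have hs := ArithmeticFunction.vonMangoldt.summable_residueClass_non_primes_div (q := 1) 0
  set g : ℕ → ℝ := fun n : ℕ ↦
    (if n.Prime then 0 else ArithmeticFunction.vonMangoldt.residueClass (q := 1) 0 n) / n with hg
  have hg0 : ∀ n, 0 ≤ g n := by
    intro n
    simp only [hg]
    split_ifs
    · simp
    · exact div_nonneg (ArithmeticFunction.vonMangoldt.residueClass_nonneg _ _) (by positivity)
  refine ⟨(∑' n, g n) + (Real.log 4 + 5), ?_, ?_⟩
  · have : 0 ≤ Real.log 4 := Real.log_nonneg (by norm_num)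
    have : 0 ≤ ∑' n, g n := tsum_nonneg hg0
    linarith
  intro N hN
  have key : ∑ n ∈ Finset.Ioc 0 N, ArithmeticFunction.vonMangoldt n / n =
      (∑ n ∈ Finset.Icc 0 N, if n.Prime then Real.log n / n else 0) +
        ∑ n ∈ Finset.Icc 0 N, g n := by
    rw [← Finset.sum_add_distrib]
    refine (Finset.sum_congr rfl fun n hn => ?_).trans
      (Finset.sum_subset (s₁ := Finset.Ioc 0 N) ?_ ?_)
    · simp only [hg]
      split_ifs with h
      · rw [ArithmeticFunction.vonMangoldt_apply_prime h]; simp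
      · have : ArithmeticFunction.vonMangoldt.residueClass (q := 1) 0 n
            = ArithmeticFunction.vonMangoldt n := by
          unfold ArithmeticFunction.vonMangoldt.residueClass
          rw [Set.indicator_of_mem]
          exact Subsingleton.elim _ _
        rw [this]; simp
    · intro n hn; simp at hn ⊢; omega
    · intro n hn hn'
      have : n = 0 := by simp at hn hn'; omega
      subst this
      simp [hg]
  have h1 : ∑ n ∈ Finset.Icc 0 N, g n ≤ ∑' n, g n := hs.sum_le_tsum _ (fun n _ => hg0 n)
  have h2 : 0 ≤ ∑ n ∈ Finset.Icc 0 N, g n := Finset.sum_nonneg fun n _ => hg0 n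
  obtain ⟨h3, h4⟩ := pz_mertens_vonMangoldt N hN
  have : 0 ≤ Real.log 4 := Real.log_nonneg (by norm_num)
  rw [abs_le]
  constructor <;> linarith

lemma pz_mertens_two : ∃ C : ℝ, ∀ t : ℝ, 2 ≤ t →
    |(∑ p ∈ primesUpTo t, (1 / (p : ℝ))) - Real.log (Real.log t)| ≤ C := by
  obtain ⟨C, hC0, hC⟩ := pz_mertens_one
  set c : ℕ → ℝ := fun n => if n.Prime then Real.log n / n else 0 with hc
  have hlog2 : 0 < Real.log 2 := Real.log_pos (by norm_num)
  refine ⟨(C + 1) / Real.log 2 + 1 + |Real.log (Real.log 2)|, fun x hx => ?_⟩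
  have hA : ∀ u : ℝ, 2 ≤ u → |(∑ k ∈ Finset.Icc 0 ⌊u⌋₊, c k) - Real.log u| ≤ C + 1 := by
    intro u hu
    have hfl : 1 ≤ ⌊u⌋₊ := Nat.le_floor (by push_cast; linarith)
    have h1 := hC ⌊u⌋₊ hfl
    have hfl' : (1 : ℝ) ≤ ⌊u⌋₊ := by exact_mod_cast hfl
    have h2 : Real.log ⌊u⌋₊ ≤ Real.log u :=
      Real.log_le_log (by linarith) (Nat.floor_le (by linarith))
    have h3 : Real.log u ≤ Real.log ⌊u⌋₊ + 1 := by
      have : Real.log u ≤ Real.log (2 * ⌊u⌋₊) :=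
        Real.log_le_log (by linarith) (by linarith [Nat.lt_floor_add_one u])
      rw [Real.log_mul (by norm_num) (by linarith)] at this
      have := Real.log_two_lt_d9
      linarith
    rw [abs_le] at h1 ⊢
    constructor <;> linarith [h1.1, h1.2]
  have hS : (∑ p ∈ primesUpTo x, (1 / (p : ℝ))) =
      ∑ n ∈ Finset.Icc 0 ⌊x⌋₊, (Real.log n)⁻¹ * c n := by
    rw [primesUpTo, Finset.sum_filter, Nat.range_succ_eq_Icc_zero]
    refine Finset.sum_congr rfl fun n hn => ?_
    simp only [hc]
    split_ifs with h
    · have : Real.log n ≠ 0 :=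
        Real.log_ne_zero_of_pos_of_ne_one (mod_cast h.pos) (mod_cast h.ne_one)
      field_simp
    · simp
  have hpos : ∀ u ∈ Set.uIcc 2 x, 0 < u ∧ 0 < Real.log u := by
    intro u hu
    rw [Set.uIcc_of_le hx] at hu
    exact ⟨by linarith [hu.1], Real.log_pos (by linarith [hu.1])⟩
  have hcont2 : ContinuousOn (fun u : ℝ => (u * Real.log u ^ 2)⁻¹) (Set.uIcc 2 x) := by
    intro u hu
    obtain ⟨h1, h2⟩ := hpos u hu
    have : u * Real.log u ^ 2 ≠ 0 := by positivity
    have : u ≠ 0 := h1.ne'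
    exact ContinuousAt.continuousWithinAt (by fun_prop (disch := assumption))
  have hcont1 : ContinuousOn (fun u : ℝ => (u * Real.log u)⁻¹) (Set.uIcc 2 x) := by
    intro u hu
    obtain ⟨h1, h2⟩ := hpos u hu
    have : u * Real.log u ≠ 0 := by positivity
    have : u ≠ 0 := h1.ne'
    exact ContinuousAt.continuousWithinAt (by fun_prop (disch := assumption))
  have hderiv : ∀ u ∈ Set.uIcc 2 x,
      HasDerivAt (fun u : ℝ => (Real.log u)⁻¹) (-(u * Real.log u ^ 2)⁻¹) u := by
    intro u hu
    obtain ⟨h1, h2⟩ := hpos u hu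
    have := (Real.hasDerivAt_log h1.ne').inv h2.ne'
    convert! this using 1
    field_simp
  have hI2 : ∫ u in (2 : ℝ)..x, (u * Real.log u ^ 2)⁻¹ = (Real.log 2)⁻¹ - (Real.log x)⁻¹ := by
    have := intervalIntegral.integral_eq_sub_of_hasDerivAt hderiv
      (hcont2.neg.intervalIntegrable)
    rw [intervalIntegral.integral_neg] at this
    linarith
  have hI1 : ∫ u in (2 : ℝ)..x, (u * Real.log u)⁻¹ =
      Real.log (Real.log x) - Real.log (Real.log 2) := by
    refine intervalIntegral.integral_eq_sub_of_hasDerivAt (f := fun u => Real.log (Real.log u))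
      (fun u hu => ?_) hcont1.intervalIntegrable
    obtain ⟨h1, h2⟩ := hpos u hu
    have := (Real.hasDerivAt_log h1.ne').log h2.ne'
    convert! this using 1
    field_simp
  have hint : IntervalIntegrable (fun u : ℝ => (u * Real.log u ^ 2)⁻¹ *
      ∑ k ∈ Finset.Icc 0 ⌊u⌋₊, c k) volume 2 x := by
    rw [intervalIntegrable_iff_integrableOn_Icc_of_le hx]
    refine integrableOn_mul_sum_Icc (c := c) (by norm_num) ?_
    rw [Set.uIcc_of_le hx] at hcont2
    exact hcont2.integrableOn_Icc
  have habel : ∑ n ∈ Finset.Icc 0 ⌊x⌋₊, (Real.log n)⁻¹ * c n =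
      (Real.log x)⁻¹ * (∑ k ∈ Finset.Icc 0 ⌊x⌋₊, c k) +
      ∫ u in (2 : ℝ)..x, (u * Real.log u ^ 2)⁻¹ * ∑ k ∈ Finset.Icc 0 ⌊u⌋₊, c k := by
    rw [sum_mul_eq_sub_integral_mul₁ c (f := fun n ↦ (Real.log n)⁻¹) (by simp [hc])
      (by simp [hc, Nat.not_prime_one]), ← intervalIntegral.integral_of_le hx,
      sub_eq_add_neg, ← intervalIntegral.integral_neg]
    · congr 1
      refine intervalIntegral.integral_congr fun u hu => ?_
      simp only [(hderiv u hu).deriv]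
      ring
    · intro u hu
      rw [← Set.uIcc_of_le hx] at hu
      exact (hderiv u hu).differentiableAt
    · rw [← Set.uIcc_of_le hx]
      refine IntegrableOn.congr_fun (f := fun u => -(u * Real.log u ^ 2)⁻¹) ?_
        (fun u hu => (hderiv u hu).deriv.symm) measurableSet_uIcc
      exact hcont2.neg.integrableOn_uIcc
  have hdiff : |(∫ u in (2 : ℝ)..x, (u * Real.log u ^ 2)⁻¹ * ∑ k ∈ Finset.Icc 0 ⌊u⌋₊, c k) -
      ∫ u in (2 : ℝ)..x, (u * Real.log u)⁻¹| ≤ (C + 1) * ((Real.log 2)⁻¹ - (Real.log x)⁻¹) := by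
    rw [← intervalIntegral.integral_sub hint hcont1.intervalIntegrable, ← hI2,
      ← intervalIntegral.integral_const_mul, ← Real.norm_eq_abs]
    refine intervalIntegral.norm_integral_le_of_norm_le hx ?_
      (hcont2.intervalIntegrable.const_mul _)
    refine Filter.Eventually.of_forall fun u hu => ?_
    have hu' : 2 ≤ u := hu.1.le
    obtain ⟨h1, h2⟩ := hpos u (by rw [Set.uIcc_of_le hx]; exact ⟨hu', hu.2⟩)
    have : (u * Real.log u ^ 2)⁻¹ * (∑ k ∈ Finset.Icc 0 ⌊u⌋₊, c k) - (u * Real.log u)⁻¹ =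
        (u * Real.log u ^ 2)⁻¹ * ((∑ k ∈ Finset.Icc 0 ⌊u⌋₊, c k) - Real.log u) := by
      field_simp
    rw [this, norm_mul, Real.norm_of_nonneg (by positivity), mul_comm]
    exact mul_le_mul_of_nonneg_right (hA u hu') (by positivity)
  have hlx : 0 < Real.log x := (hpos x Set.right_mem_uIcc).2
  have hfirst : |(Real.log x)⁻¹ * (∑ k ∈ Finset.Icc 0 ⌊x⌋₊, c k) - 1| ≤
      (C + 1) * (Real.log x)⁻¹ := by
    have : (Real.log x)⁻¹ * (∑ k ∈ Finset.Icc 0 ⌊x⌋₊, c k) - 1 =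
        (Real.log x)⁻¹ * ((∑ k ∈ Finset.Icc 0 ⌊x⌋₊, c k) - Real.log x) := by
      field_simp
    rw [this, abs_mul, abs_of_nonneg (by positivity), mul_comm]
    exact mul_le_mul_of_nonneg_right (hA x hx) (by positivity)
  rw [hS, habel]
  rw [hI1] at hdiff
  have h9 := neg_abs_le (Real.log (Real.log 2))
  have h10 := le_abs_self (Real.log (Real.log 2))
  have : (C + 1) / Real.log 2 = (C + 1) * (Real.log 2)⁻¹ := by ring
  rw [this]
  rw [abs_le] at *
  constructor <;> linarith [hdiff.1, hdiff.2, hfirst.1, hfirst.2]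

lemma pz_loglog_tendsto : Tendsto (fun t : ℝ => Real.log (Real.log t)) atTop atTop :=
  Real.tendsto_log_atTop.comp Real.tendsto_log_atTop

lemma pz_mertens : Tendsto (fun t : ℝ =>
    (∑ p ∈ primesUpTo t, (1 / (p : ℝ))) / Real.log (Real.log t)) atTop (nhds 1) := by
  obtain ⟨C, hC⟩ := pz_mertens_two
  have h1 : Tendsto (fun t : ℝ => C / Real.log (Real.log t)) atTop (nhds 0) :=
    tendsto_const_nhds.div_atTop pz_loglog_tendsto
  rw [tendsto_iff_norm_sub_tendsto_zero]
  refine squeeze_zero' (Eventually.of_forall fun _ => norm_nonneg _) ?_ h1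
  filter_upwards [eventually_ge_atTop 2, pz_loglog_tendsto.eventually_gt_atTop 0] with t ht ht2
  have : (∑ p ∈ primesUpTo t, (1 / (p : ℝ))) / Real.log (Real.log t) - 1 =
    ((∑ p ∈ primesUpTo t, (1 / (p : ℝ))) - Real.log (Real.log t)) / Real.log (Real.log t) := by
    field_simp
  rw [this, norm_div, Real.norm_of_nonneg ht2.le]
  exact div_le_div_of_nonneg_right (hC t ht) ht2.le

lemma pz_padic_prod (q : ℕ) [Fact q.Prime] (s : Finset ℕ) (hs : ∀ p ∈ s, p.Prime) (k : ℕ → ℤ) :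
    padicValRat q (∏ p ∈ s, (p : ℚ) ^ (k p)) = if q ∈ s then k q else 0 := by
  induction s using Finset.induction_on with
  | empty => simp
  | insert a s ha ih =>
    have hs' : ∀ p ∈ s, p.Prime := fun p hp => hs p (Finset.mem_insert_of_mem hp)
    have hap : a.Prime := hs a (Finset.mem_insert_self _ _)
    have hne : ∏ p ∈ s, (p : ℚ) ^ (k p) ≠ 0 :=
      Finset.prod_ne_zero_iff.2 fun p hp => zpow_ne_zero _ (by exact_mod_cast (hs' p hp).ne_zero)
    rw [Finset.prod_insert ha, padicValRat.mul
      (zpow_ne_zero _ (by exact_mod_cast hap.ne_zero)) hne, ih hs',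
      padicValRat.zpow, padicValRat.of_nat]
    by_cases h : q = a
    · subst h
      simp [ha]
    · have : padicValNat q a = 0 :=
        padicValNat.eq_zero_of_not_dvd fun hd => h ((Nat.prime_dvd_prime_iff_eq Fact.out hap).1 hd)
      simp [this, h]

lemma pz_log_indep (s : Finset ℕ) (hs : ∀ p ∈ s, p.Prime) (k : s → ℤ)
    (h : ∑ p : s, (k p : ℝ) * Real.log (p : ℕ) = 0) : k = 0 := by
  classical
  set k' : ℕ → ℤ := fun n => if hn : n ∈ s then k ⟨n, hn⟩ else 0 with hk'
  have hkk : ∀ p : s, k' p = k p := fun p => by simp [hk']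
  have h1 : ∑ p ∈ s, (k' p : ℝ) * Real.log p = 0 := by
    rw [← Finset.sum_coe_sort s]
    simpa [hkk] using h
  have h2 : ∏ p ∈ s, (p : ℝ) ^ (k' p) = 1 := by
    have hpos : ∀ p ∈ s, (0 : ℝ) < (p : ℝ) ^ (k' p) := fun p hp =>
      zpow_pos (by exact_mod_cast (hs p hp).pos) _
    apply Real.eq_one_of_pos_of_log_eq_zero (Finset.prod_pos hpos)
    rw [Real.log_prod (fun p hp => (hpos p hp).ne'), ← h1]
    exact Finset.sum_congr rfl fun p hp => Real.log_zpow _ _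
  have h3 : ∏ p ∈ s, (p : ℚ) ^ (k' p) = 1 := by
    have h4 : ((∏ p ∈ s, (p : ℚ) ^ (k' p) : ℚ) : ℝ) = 1 := by push_cast; exact h2
    exact_mod_cast h4
  funext q
  have hq : Fact (q : ℕ).Prime := ⟨hs q q.2⟩
  have := pz_padic_prod q s hs k'
  rw [h3] at this
  simp [hkk] at this
  simp [← this]

/-- The uniform distribution on `(a, b]`. -/
noncomputable def pzUnif (a b : ℝ) : Measure ℝ :=
  (ENNReal.ofReal (b - a))⁻¹ • volume.restrict (Set.Ioc a b)

lemma pzUnif_prob {a b : ℝ} (h : a < b) : IsProbabilityMeasure (pzUnif a b) := by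
  constructor
  rw [pzUnif]
  simp only [Measure.smul_apply, Measure.restrict_apply_univ, Real.volume_Ioc, smul_eq_mul]
  exact ENNReal.inv_mul_cancel (by simpa using h) (by simp)

lemma pzUnif_integral {a b : ℝ} (h : a < b) (f : ℝ → ℂ) :
    ∫ x, f x ∂(pzUnif a b) = ((b - a : ℝ) : ℂ)⁻¹ * ∫ x in a..b, f x := by
  rw [pzUnif, integral_smul_measure, intervalIntegral.integral_of_le h.le, ENNReal.toReal_inv,
    ENNReal.toReal_ofReal (by linarith)]
  rw [← Complex.ofReal_inv, Complex.real_smul]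

lemma pzUnif_ac (a b : ℝ) : pzUnif a b ≪ volume :=
  (Measure.restrict_le_self.absolutelyContinuous).smul_left _

/-- The uniform distribution on `(0, 2π]`. -/
noncomputable def pzCirc : Measure ℝ := pzUnif 0 (2 * π)

instance pzCirc_prob : IsProbabilityMeasure pzCirc := pzUnif_prob (by positivity)

/-- The uniform distribution on `(T, 2T]` (for `T ≥ 1`). -/
noncomputable def pzTau (T : ℝ) : Measure ℝ := pzUnif (max T 1) (2 * max T 1)

instance pzTau_prob (T : ℝ) : IsProbabilityMeasure (pzTau T) := by
  have : 1 ≤ max T 1 := le_max_right _ _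
  exact pzUnif_prob (by linarith)

lemma pz_unif_exp {a b l : ℝ} (h : a < b) (hl : l ≠ 0) :
    ∫ x : ℝ, Complex.exp (Complex.I * (l * x)) ∂(pzUnif a b) =
      ((b - a : ℝ) : ℂ)⁻¹ * ((Complex.exp (Complex.I * l * b) - Complex.exp (Complex.I * l * a))
        / (Complex.I * l)) := by
  rw [pzUnif_integral h]
  have : (Complex.I * l : ℂ) ≠ 0 := by simp [hl]
  rw [← integral_exp_mul_complex this]
  simp only [mul_assoc]

lemma pzTau_exp {l : ℝ} (hl : l ≠ 0) :
    Tendsto (fun T : ℝ => ∫ x : ℝ, Complex.exp (Complex.I * (l * x)) ∂(pzTau T)) atTop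
      (nhds 0) := by
  have h1 : Tendsto (fun T : ℝ => (2 / |l|) / T) atTop (nhds 0) :=
    tendsto_const_nhds.div_atTop tendsto_id
  refine squeeze_zero_norm' ?_ h1
  filter_upwards [eventually_ge_atTop 1] with T hT
  have hm : max T 1 = T := max_eq_left hT
  rw [pzTau, hm, pz_unif_exp (by linarith) hl]
  have hT0 : 0 < T := by linarith
  have e : ∀ r : ℝ, ‖Complex.exp (Complex.I * l * r)‖ = 1 := by
    intro r
    rw [mul_assoc, mul_comm, ← Complex.ofReal_mul, Complex.norm_exp_ofReal_mul_I]
  have h2 : ‖Complex.exp (Complex.I * l * (2 * T : ℝ)) - Complex.exp (Complex.I * l * T)‖ ≤ 2 := by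
    refine (norm_sub_le _ _).trans ?_
    rw [e, e]; norm_num
  rw [norm_mul, norm_div, norm_inv, Complex.norm_real, norm_mul, Complex.norm_I, one_mul,
    Complex.norm_real, Real.norm_eq_abs, Real.norm_eq_abs]
  have : |2 * T - T| = T := by rw [abs_of_pos] <;> linarith
  rw [this, inv_mul_eq_div]
  gcongr

lemma pzCirc_exp (n : ℤ) (hn : n ≠ 0) :
    ∫ x : ℝ, Complex.exp (Complex.I * (n * x)) ∂pzCirc = 0 := by
  have := pz_unif_exp (a := 0) (b := 2 * π) (l := n) (by positivity) (by exact_mod_cast hn)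
  push_cast at this
  rw [pzCirc, this]
  have h2 : Complex.exp (Complex.I * n * (2 * π)) = 1 := by
    rw [Complex.exp_eq_one_iff]
    exact ⟨n, by ring⟩
  rw [h2]
  simp

section
variable {ι : Type*} [Fintype ι]

/-- The characters of the torus. -/
noncomputable def pzChar (k : ι → ℤ) (θ : ι → ℝ) : ℂ :=
  Complex.exp (Complex.I * ∑ i, (k i : ℂ) * (θ i : ℂ))

lemma pzChar_cont (k : ι → ℤ) : Continuous (pzChar k) := by
  unfold pzChar; fun_prop

lemma pzChar_norm (k : ι → ℤ) (θ : ι → ℝ) : ‖pzChar k θ‖ = 1 := by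
  have : (Complex.I * ∑ i, (k i : ℂ) * (θ i : ℂ)) =
      ((∑ i, (k i : ℝ) * θ i : ℝ) : ℂ) * Complex.I := by
    push_cast; ring
  rw [pzChar, this, Complex.norm_exp_ofReal_mul_I]

lemma pzChar_mul (k l : ι → ℤ) : pzChar k * pzChar l = pzChar (k + l) := by
  funext θ
  simp only [pzChar, Pi.mul_apply, ← Complex.exp_add, Pi.add_apply, Int.cast_add]
  congr 1
  rw [← mul_add, ← Finset.sum_add_distrib]
  congr 1
  exact Finset.sum_congr rfl fun i _ => by ring

lemma pzChar_zero : pzChar (0 : ι → ℤ) = 1 := by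
  funext θ; simp [pzChar]

lemma pzChar_integral (k : ι → ℤ) (hk : k ≠ 0) :
    ∫ θ, pzChar k θ ∂(Measure.pi fun _ : ι => pzCirc) = 0 := by
  have : ∀ θ : ι → ℝ, pzChar k θ = ∏ i, Complex.exp (Complex.I * (k i * θ i)) := by
    intro θ
    rw [pzChar, Finset.mul_sum, Complex.exp_sum]
  simp_rw [this]
  rw [integral_fintype_prod_eq_prod
    (f := fun (i : ι) (x : ℝ) => Complex.exp (Complex.I * (k i * x)))]
  obtain ⟨i, hi⟩ := Function.ne_iff.1 hk
  exact Finset.prod_eq_zero (Finset.mem_univ i) (pzCirc_exp _ hi)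

/-- Equidistribution for a test function. -/
def pzW (w : ι → ℝ) (F : (ι → ℝ) → ℂ) : Prop :=
  Continuous F ∧ (∃ R : ℝ, ∀ θ, ‖F θ‖ ≤ R) ∧
  Tendsto (fun T : ℝ => ∫ τ : ℝ, F (fun i => τ * w i) ∂(pzTau T)) atTop
    (nhds (∫ θ, F θ ∂(Measure.pi fun _ : ι => pzCirc)))

lemma pz_int {X : Type*} [TopologicalSpace X] [MeasurableSpace X] [BorelSpace X]
    (μ : Measure X) [IsFiniteMeasure μ] {F : X → ℂ} (hF : Continuous F)
    (hb : ∃ R : ℝ, ∀ θ, ‖F θ‖ ≤ R) : Integrable F μ := by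
  obtain ⟨R, hR⟩ := hb
  exact Integrable.of_bound hF.aestronglyMeasurable R (Eventually.of_forall hR)

lemma pzW_intT {w : ι → ℝ} {F : (ι → ℝ) → ℂ} (h : pzW w F) (T : ℝ) :
    Integrable (fun τ : ℝ => F (fun i => τ * w i)) (pzTau T) := by
  obtain ⟨h1, ⟨R, hR⟩, -⟩ := h
  exact pz_int _ (h1.comp (by fun_prop)) ⟨R, fun θ => hR _⟩

lemma pzW_char (w : ι → ℝ) (hw : ∀ k : ι → ℤ, ∑ i, (k i : ℝ) * w i = 0 → k = 0) (k : ι → ℤ) :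
    pzW w (pzChar k) := by
  refine ⟨pzChar_cont k, ⟨1, fun θ => (pzChar_norm k θ).le⟩, ?_⟩
  by_cases hk : k = 0
  · subst hk
    simp [pzChar_zero]
  · rw [pzChar_integral k hk]
    have hl : ∑ i, (k i : ℝ) * w i ≠ 0 := fun h => hk (hw k h)
    refine (pzTau_exp hl).congr fun T => ?_
    refine integral_congr_ae (Eventually.of_forall fun τ => ?_)
    simp only [pzChar]
    congr 2
    push_cast
    rw [Finset.sum_mul]
    exact Finset.sum_congr rfl fun i _ => by ring

lemma pzW_span (w : ι → ℝ) (hw : ∀ k : ι → ℤ, ∑ i, (k i : ℝ) * w i = 0 → k = 0)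
    {F : (ι → ℝ) → ℂ} (hF : F ∈ Submodule.span ℂ (Set.range (pzChar (ι := ι)))) : pzW w F := by
  induction hF using Submodule.span_induction with
  | mem x h =>
    obtain ⟨k, rfl⟩ := h
    exact pzW_char w hw k
  | zero => exact ⟨continuous_zero, ⟨0, fun θ => by simp⟩, by simp⟩
  | add x y hx hy h1 h2 =>
    have i1 := pzW_intT h1
    have i2 := pzW_intT h2
    obtain ⟨c1, ⟨R1, b1⟩, t1⟩ := h1
    obtain ⟨c2, ⟨R2, b2⟩, t2⟩ := h2
    refine ⟨c1.add c2, ⟨R1 + R2, fun θ => (norm_add_le _ _).trans (add_le_add (b1 θ) (b2 θ))⟩, ?_⟩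
    simp only [Pi.add_apply]
    rw [integral_add (pz_int _ c1 ⟨R1, b1⟩) (pz_int _ c2 ⟨R2, b2⟩)]
    refine (t1.add t2).congr fun T => ?_
    rw [integral_add (i1 T) (i2 T)]
  | smul a x hx h1 =>
    obtain ⟨c1, ⟨R1, b1⟩, t1⟩ := h1
    refine ⟨c1.const_smul a, ⟨‖a‖ * R1, fun θ => ?_⟩, ?_⟩
    · rw [Pi.smul_apply, norm_smul]
      exact mul_le_mul_of_nonneg_left (b1 θ) (norm_nonneg _)
    · simp only [Pi.smul_apply, integral_smul]
      exact t1.const_smul a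

lemma pz_span_mul {F G : (ι → ℝ) → ℂ} (hF : F ∈ Submodule.span ℂ (Set.range (pzChar (ι := ι))))
    (hG : G ∈ Submodule.span ℂ (Set.range (pzChar (ι := ι)))) :
    F * G ∈ Submodule.span ℂ (Set.range (pzChar (ι := ι))) := by
  have h := Submodule.mul_mem_mul hF hG
  rw [Submodule.span_mul_span] at h
  refine Submodule.span_mono ?_ h
  rintro _ ⟨_, ⟨k, rfl⟩, _, ⟨l, rfl⟩, rfl⟩
  exact ⟨k + l, (pzChar_mul k l).symm⟩

lemma pz_span_pow {F : (ι → ℝ) → ℂ} (hF : F ∈ Submodule.span ℂ (Set.range (pzChar (ι := ι))))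
    (n : ℕ) : F ^ n ∈ Submodule.span ℂ (Set.range (pzChar (ι := ι))) := by
  induction n with
  | zero =>
    rw [pow_zero, ← pzChar_zero]
    exact Submodule.subset_span ⟨0, rfl⟩
  | succ n ih => rw [pow_succ]; exact pz_span_mul ih hF

lemma pzW_exp (w : ι → ℝ) (hw : ∀ k : ι → ℤ, ∑ i, (k i : ℝ) * w i = 0 → k = 0)
    {F : (ι → ℝ) → ℂ} (hF : F ∈ Submodule.span ℂ (Set.range (pzChar (ι := ι)))) :
    pzW w (fun θ => Complex.exp (F θ)) := by
  obtain ⟨c, ⟨R, b⟩, -⟩ := pzW_span w hw hF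
  have hR : 0 ≤ R := (norm_nonneg _).trans (b 0)
  have cexp : Continuous (fun θ => Complex.exp (F θ)) := Complex.continuous_exp.comp c
  have bexp : ∃ R' : ℝ, ∀ θ, ‖Complex.exp (F θ)‖ ≤ R' := by
    refine ⟨Real.exp R, fun θ => ?_⟩
    rw [Complex.norm_exp]
    exact Real.exp_le_exp.2 ((Complex.re_le_norm _).trans (b θ))
  refine ⟨cexp, bexp, ?_⟩
  rw [Metric.tendsto_atTop]
  intro ε hε
  have hlim : Tendsto (fun n : ℕ => R ^ n / n.factorial * 2) atTop (nhds 0) := by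
    simpa using (FloorSemiring.tendsto_pow_div_factorial_atTop R).mul_const 2
  have hlim2 : Tendsto (fun n : ℕ => R / ((n : ℝ) + 1)) atTop (nhds 0) :=
    tendsto_const_nhds.div_atTop (tendsto_natCast_atTop_atTop.atTop_add tendsto_const_nhds)
  obtain ⟨n, hn1, hn2⟩ := ((hlim.eventually_lt_const (show (0 : ℝ) < ε / 4 by linarith)).and
    (hlim2.eventually_lt_const (show (0 : ℝ) < 1 / 2 by norm_num))).exists
  set G : (ι → ℝ) → ℂ := ∑ m ∈ Finset.range n, ((m.factorial : ℂ)⁻¹) • F ^ m with hG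
  have hGm : G ∈ Submodule.span ℂ (Set.range (pzChar (ι := ι))) :=
    Submodule.sum_mem _ fun m _ => Submodule.smul_mem _ _ (pz_span_pow hF m)
  have hGW := pzW_span w hw hGm
  have iG := pzW_intT hGW
  obtain ⟨cG, bG, tG⟩ := hGW
  have happ : ∀ θ, ‖Complex.exp (F θ) - G θ‖ ≤ ε / 4 := by
    intro θ
    have h1 : ‖F θ‖ / n.succ ≤ 1 / 2 := by
      refine le_trans ?_ hn2.le
      push_cast
      gcongr
      exact b θ
    have h2 := Complex.exp_bound' h1
    have h3 : G θ = ∑ m ∈ Finset.range n, F θ ^ m / m.factorial := by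
      simp only [hG, Finset.sum_apply, Pi.smul_apply, Pi.pow_apply, smul_eq_mul]
      exact Finset.sum_congr rfl fun m _ => by ring
    rw [h3]
    refine h2.trans (le_trans ?_ hn1.le)
    gcongr
    exact b θ
  have hmu : ‖∫ θ, Complex.exp (F θ) ∂(Measure.pi fun _ : ι => pzCirc) -
      ∫ θ, G θ ∂(Measure.pi fun _ : ι => pzCirc)‖ ≤ ε / 4 := by
    rw [← integral_sub (pz_int _ cexp bexp) (pz_int _ cG bG)]
    simpa using norm_integral_le_of_norm_le_const (μ := Measure.pi fun _ : ι => pzCirc)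
      (Eventually.of_forall happ)
  have hT : ∀ T, ‖∫ τ : ℝ, Complex.exp (F (fun i => τ * w i)) ∂(pzTau T) -
      ∫ τ : ℝ, G (fun i => τ * w i) ∂(pzTau T)‖ ≤ ε / 4 := by
    intro T
    have i1 : Integrable (fun τ : ℝ => Complex.exp (F (fun i => τ * w i))) (pzTau T) := by
      obtain ⟨R', b'⟩ := bexp
      exact pz_int _ (cexp.comp (by fun_prop : Continuous fun (τ : ℝ) (i : ι) => τ * w i))
        ⟨R', fun τ => b' _⟩
    rw [← integral_sub i1 (iG T)]
    simpa using norm_integral_le_of_norm_le_const (μ := pzTau T)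
      (Eventually.of_forall fun τ : ℝ => happ (fun i => τ * w i))
  obtain ⟨N, hN⟩ := Metric.tendsto_atTop.1 tG (ε / 4) (by linarith)
  refine ⟨N, fun T hTN => ?_⟩
  have h1 := hN T hTN
  have h2 := hT T
  rw [dist_eq_norm] at h1 ⊢
  rw [norm_sub_rev] at hmu
  calc _ = ‖((∫ τ : ℝ, Complex.exp (F (fun i => τ * w i)) ∂(pzTau T)) -
      ∫ τ : ℝ, G (fun i => τ * w i) ∂(pzTau T)) + ((∫ τ : ℝ, G (fun i => τ * w i) ∂(pzTau T)) -
        ∫ θ, G θ ∂(Measure.pi fun _ : ι => pzCirc)) +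
        ((∫ θ, G θ ∂(Measure.pi fun _ : ι => pzCirc)) -
        ∫ θ, Complex.exp (F θ) ∂(Measure.pi fun _ : ι => pzCirc))‖ := by congr 1; ring
    _ ≤ _ := norm_add₃_le
    _ < ε := by linarith

end

section
variable {ι : Type*} [Fintype ι]

/-- The random model. -/
noncomputable def pzX (a : ι → ℝ) (θ : ι → ℝ) : ℝ := ∑ i, a i * Real.cos (θ i)

lemma pzX_cont (a : ι → ℝ) : Continuous (pzX a) := by unfold pzX; fun_prop

/-- The law of the random model. -/
noncomputable def pzNu (a : ι → ℝ) : Measure ℝ := (Measure.pi fun _ : ι => pzCirc).map (pzX a)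

instance pzNu_prob (a : ι → ℝ) : IsProbabilityMeasure (pzNu a) :=
  Measure.isProbabilityMeasure_map (pzX_cont a).measurable.aemeasurable

/-- The law of the value at a random time. -/
noncomputable def pzRho (w a : ι → ℝ) (T : ℝ) : Measure ℝ :=
  (pzTau T).map (fun τ => pzX a (fun i => τ * w i))

lemma pzRho_cont (w a : ι → ℝ) : Continuous (fun τ : ℝ => pzX a (fun i => τ * w i)) :=
  (pzX_cont a).comp (by fun_prop)

instance pzRho_prob (w a : ι → ℝ) (T : ℝ) : IsProbabilityMeasure (pzRho w a T) :=
  Measure.isProbabilityMeasure_map (pzRho_cont w a).measurable.aemeasurable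

lemma pz_cos_mem (i : ι) : (fun θ : ι → ℝ => (Real.cos (θ i) : ℂ)) ∈
    Submodule.span ℂ (Set.range (pzChar (ι := ι))) := by
  classical
  have : (fun θ : ι → ℝ => (Real.cos (θ i) : ℂ)) =
      (1 / 2 : ℂ) • (pzChar (Pi.single i 1) + pzChar (Pi.single i (-1))) := by
    funext θ
    simp only [pzChar, Pi.smul_apply, Pi.add_apply, Pi.single_apply, smul_eq_mul]
    simp only [Int.cast_ite, Int.cast_one, Int.cast_zero, ite_mul, zero_mul, Finset.sum_ite_eq',
      Finset.mem_univ, if_true, Int.cast_neg, Complex.ofReal_cos, Complex.cos]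
    ring_nf
  rw [this]
  exact Submodule.smul_mem _ _ (Submodule.add_mem _ (Submodule.subset_span ⟨_, rfl⟩)
    (Submodule.subset_span ⟨_, rfl⟩))

lemma pz_charFun_tendsto (w : ι → ℝ) (hw : ∀ k : ι → ℤ, ∑ i, (k i : ℝ) * w i = 0 → k = 0)
    (a : ι → ℝ) (ξ : ℝ) :
    Tendsto (fun T => charFun (pzRho w a T) ξ) atTop (nhds (charFun (pzNu a) ξ)) := by
  have hmem : (fun θ : ι → ℝ => (ξ * pzX a θ * Complex.I : ℂ)) ∈
      Submodule.span ℂ (Set.range (pzChar (ι := ι))) := by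
    have : (fun θ : ι → ℝ => (ξ * pzX a θ * Complex.I : ℂ)) =
        ∑ i, (ξ * Complex.I * a i : ℂ) • (fun θ : ι → ℝ => (Real.cos (θ i) : ℂ)) := by
      funext θ
      simp only [pzX, Finset.sum_apply, Pi.smul_apply, smul_eq_mul]
      push_cast
      rw [Finset.mul_sum, Finset.sum_mul]
      exact Finset.sum_congr rfl fun i _ => by ring
    rw [this]
    exact Submodule.sum_mem _ fun i _ => Submodule.smul_mem _ _ (pz_cos_mem i)
  obtain ⟨-, -, h⟩ := pzW_exp w hw hmem
  have e1 : charFun (pzNu a) ξ = ∫ θ, Complex.exp (ξ * pzX a θ * Complex.I)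
      ∂(Measure.pi fun _ : ι => pzCirc) := by
    rw [charFun_apply_real, pzNu, integral_map (pzX_cont a).measurable.aemeasurable]
    exact (by fun_prop : Continuous fun x : ℝ =>
      Complex.exp (ξ * x * Complex.I)).aestronglyMeasurable
  have e2 : ∀ T, charFun (pzRho w a T) ξ =
      ∫ τ : ℝ, Complex.exp (ξ * pzX a (fun i => τ * w i) * Complex.I) ∂(pzTau T) := by
    intro T
    rw [charFun_apply_real, pzRho, integral_map (pzRho_cont w a).measurable.aemeasurable]
    exact (by fun_prop : Continuous fun x : ℝ =>
      Complex.exp (ξ * x * Complex.I)).aestronglyMeasurable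
  simp_rw [e1, e2]
  exact h

lemma pz_cos_null (c : ℝ) : volume {x : ℝ | Real.cos x = c} = 0 := by
  by_cases h : ∃ x₀, Real.cos x₀ = c
  · obtain ⟨x₀, rfl⟩ := h
    refine Set.Countable.measure_zero ?_ _
    have : {x : ℝ | Real.cos x = Real.cos x₀} ⊆
        (Set.range fun k : ℤ => 2 * k * π + x₀) ∪ (Set.range fun k : ℤ => 2 * k * π - x₀) := by
      intro x hx
      obtain ⟨k, hk⟩ := Real.cos_eq_cos_iff.1 (Eq.symm hx)
      rcases hk with hk | hk
      · exact Or.inl ⟨k, hk.symm⟩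
      · exact Or.inr ⟨k, hk.symm⟩
    exact ((Set.countable_range _).union (Set.countable_range _)).mono this
  · push Not at h
    have : {x : ℝ | Real.cos x = c} = ∅ := Set.eq_empty_of_forall_notMem fun x hx => h x hx
    simp [this]

lemma pzNu_atom (a : ι → ℝ) (j : ι) (hj : a j ≠ 0) (c : ℝ) : pzNu a {c} = 0 := by
  classical
  set P : Measure (ι → ℝ) := Measure.pi fun _ : ι => pzCirc with hP
  have hind : ProbabilityTheory.iIndepFun (fun (i : ι) (θ : ι → ℝ) => a i * Real.cos (θ i)) P :=
    ProbabilityTheory.iIndepFun_pi (X := fun i x => a i * Real.cos x)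
      (fun i => by fun_prop)
  have hind2 := hind.indepFun_finsetSum_of_notMem (fun i => by fun_prop)
    (s := Finset.univ.erase j) (i := j) (by simp)
  have hsum : pzX a = (∑ i ∈ Finset.univ.erase j, fun θ : ι → ℝ => a i * Real.cos (θ i)) +
      fun θ : ι → ℝ => a j * Real.cos (θ j) := by
    funext θ
    simp only [pzX, Pi.add_apply, Finset.sum_apply]
    rw [Finset.sum_erase_add _ _ (Finset.mem_univ j)]
  set Y : (ι → ℝ) → ℝ := ∑ i ∈ Finset.univ.erase j, fun θ : ι → ℝ => a i * Real.cos (θ i) with hY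
  set Z : (ι → ℝ) → ℝ := fun θ : ι → ℝ => a j * Real.cos (θ j) with hZ
  have hYm : Measurable Y := by rw [hY]; fun_prop
  have hZm : Measurable Z := by rw [hZ]; fun_prop
  have hZatom : ∀ d, (P.map Z) {d} = 0 := by
    intro d
    have hmp : MeasurePreserving (Function.eval j) P pzCirc := measurePreserving_eval _ j
    have : P.map Z = pzCirc.map (fun x => a j * Real.cos x) := by
      rw [← hmp.map_eq, Measure.map_map (by fun_prop) (by fun_prop)]
      rfl
    rw [this, Measure.map_apply (by fun_prop) (measurableSet_singleton _)]
    refine pzUnif_ac _ _ (measure_mono_null ?_ (pz_cos_null (d / a j)))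
    intro x hx
    simp only [Set.mem_preimage, Set.mem_singleton_iff] at hx
    rw [Set.mem_ofPred_eq, ← hx]
    field_simp
  have hjoint : P.map (fun ω => (Y ω, Z ω)) = (P.map Y).prod (P.map Z) :=
    (ProbabilityTheory.indepFun_iff_map_prod_eq_prod_map_map hYm.aemeasurable
      hZm.aemeasurable).1 hind2
  have hprobY : IsProbabilityMeasure (P.map Y) :=
    Measure.isProbabilityMeasure_map hYm.aemeasurable
  have hprobZ : IsProbabilityMeasure (P.map Z) :=
    Measure.isProbabilityMeasure_map hZm.aemeasurable
  have hnu : pzNu a = ((P.map Y).prod (P.map Z)).map (fun q => q.1 + q.2) := by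
    rw [← hjoint, Measure.map_map (by fun_prop) (by fun_prop), pzNu, hsum]
    rfl
  have hms : MeasurableSet {q : ℝ × ℝ | q.1 + q.2 = c} :=
    measurableSet_eq_fun (by fun_prop) (by fun_prop)
  rw [hnu, Measure.map_apply (by fun_prop) (measurableSet_singleton _)]
  change ((P.map Y).prod (P.map Z)) {q : ℝ × ℝ | q.1 + q.2 = c} = 0
  rw [Measure.measure_prod_null hms]
  refine Eventually.of_forall fun y => ?_
  refine measure_mono_null ?_ (hZatom (c - y))
  intro z hz
  have : y + z = c := hz
  simp only [Set.mem_singleton_iff]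
  linarith

/-- Kronecker--Weyl for the distribution function. -/
theorem pz_kw (w : ι → ℝ) (hw : ∀ k : ι → ℤ, ∑ i, (k i : ℝ) * w i = 0 → k = 0)
    (a : ι → ℝ) (j : ι) (hj : a j ≠ 0) (x : ℝ) :
    Tendsto (fun T : ℝ => (1 / T) *
      (volume {τ : ℝ | τ ∈ Set.Icc T (2 * T) ∧ pzX a (fun i => τ * w i) ≤ x}).toReal) atTop
      (nhds (pzNu a (Set.Iic x)).toReal) := by
  have h1 : Tendsto (fun T : ℝ => (pzRho w a T (Set.Iic x)).toReal) atTop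
      (nhds (pzNu a (Set.Iic x)).toReal) := by
    refine (ENNReal.tendsto_toReal (measure_ne_top _ _)).comp ?_
    refine tendsto_of_seq_tendsto fun u hu => ?_
    have := ProbabilityMeasure.tendsto_of_tendsto_charFun
      (μ := fun n => (⟨pzRho w a (u n), inferInstance⟩ : ProbabilityMeasure ℝ))
      (μ₀ := ⟨pzNu a, inferInstance⟩)
      (fun ξ => (pz_charFun_tendsto w hw a ξ).comp hu)
    refine ProbabilityMeasure.tendsto_measure_of_null_frontier_of_tendsto' this ?_
    rw [frontier_Iic]
    exact pzNu_atom a j hj x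
  refine h1.congr' ?_
  filter_upwards [eventually_ge_atTop 1] with T hT
  have hT0 : 0 < T := by linarith
  have hm : max T 1 = T := max_eq_left hT
  have hms : MeasurableSet {τ : ℝ | pzX a (fun i => τ * w i) ≤ x} :=
    measurableSet_le (pzRho_cont w a).measurable measurable_const
  rw [pzRho, Measure.map_apply (pzRho_cont w a).measurable measurableSet_Iic, pzTau, hm, pzUnif]
  have : (fun τ => pzX a (fun i => τ * w i)) ⁻¹' Set.Iic x =
    {τ : ℝ | pzX a (fun i => τ * w i) ≤ x} := rfl
  rw [this, Measure.smul_apply, Measure.restrict_congr_set Ioc_ae_eq_Icc, Measure.restrict_apply hms, smul_eq_mul,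
    ENNReal.toReal_mul, ENNReal.toReal_inv, ENNReal.toReal_ofReal (by linarith)]
  have e : {τ : ℝ | τ ∈ Set.Icc T (2 * T) ∧ pzX a (fun i => τ * w i) ≤ x} =
    {τ : ℝ | pzX a (fun i => τ * w i) ≤ x} ∩ Set.Icc T (2 * T) := by
    ext τ; exact and_comm
  rw [e]
  congr 1
  rw [one_div]; congr 1; ring

end

/-- Characteristic function of `cos θ`. -/
noncomputable def pzPhi (b : ℝ) : ℂ := ∫ x : ℝ, Complex.exp (b * Real.cos x * Complex.I) ∂pzCirc

lemma pzNu_charFun {ι : Type*} [Fintype ι] (a : ι → ℝ) (ξ : ℝ) :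
    charFun (pzNu a) ξ = ∏ i, pzPhi (ξ * a i) := by
  have e1 : charFun (pzNu a) ξ = ∫ θ, Complex.exp (ξ * pzX a θ * Complex.I)
      ∂(Measure.pi fun _ : ι => pzCirc) := by
    rw [charFun_apply_real, pzNu, integral_map (pzX_cont a).measurable.aemeasurable]
    exact (by fun_prop : Continuous fun x : ℝ =>
      Complex.exp (ξ * x * Complex.I)).aestronglyMeasurable
  have e2 : ∀ θ : ι → ℝ, Complex.exp (ξ * pzX a θ * Complex.I) =
      ∏ i, Complex.exp ((ξ * a i : ℝ) * Real.cos (θ i) * Complex.I) := by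
    intro θ
    rw [← Complex.exp_sum]
    congr 1
    simp only [pzX]
    push_cast
    rw [Finset.mul_sum, Finset.sum_mul]
    exact Finset.sum_congr rfl fun i _ => by ring
  rw [e1]
  simp_rw [e2]
  rw [integral_fintype_prod_eq_prod
    (f := fun (i : ι) (x : ℝ) => Complex.exp ((ξ * a i : ℝ) * Real.cos x * Complex.I))]
  rfl

lemma pz_norm_exp (b x : ℝ) : ‖Complex.exp (b * Real.cos x * Complex.I)‖ = 1 := by
  rw [← Complex.ofReal_mul, Complex.norm_exp_ofReal_mul_I]

lemma pzPhi_norm (b : ℝ) : ‖pzPhi b‖ ≤ 1 := by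
  have := norm_integral_le_of_norm_le_const (μ := pzCirc)
    (f := fun x : ℝ => Complex.exp (b * Real.cos x * Complex.I)) (C := 1)
    (Eventually.of_forall fun x => (pz_norm_exp b x).le)
  simpa [pzPhi] using this

lemma pzCirc_cos : ∫ x : ℝ, (Real.cos x : ℂ) ∂pzCirc = 0 := by
  rw [pzCirc, pzUnif_integral (by positivity), intervalIntegral.integral_ofReal, integral_cos]
  simp

lemma pzCirc_cos_sq : ∫ x : ℝ, ((Real.cos x ^ 2 : ℝ) : ℂ) ∂pzCirc = 1 / 2 := by
  rw [pzCirc, pzUnif_integral (by positivity), intervalIntegral.integral_ofReal, integral_cos_sq]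
  have : (π : ℂ) ≠ 0 := by exact_mod_cast Real.pi_ne_zero
  simp
  field_simp

lemma pzPhi_taylor (b : ℝ) (hb : |b| ≤ 1) : ‖pzPhi b - (1 - (b : ℂ) ^ 2 / 4)‖ ≤ |b| ^ 3 := by
  have hc : ∀ {f : ℝ → ℂ}, Continuous f → (∃ R : ℝ, ∀ θ, ‖f θ‖ ≤ R) → Integrable f pzCirc :=
    fun h1 h2 => pz_int _ h1 h2
  have i0 : Integrable (fun x : ℝ => Complex.exp (b * Real.cos x * Complex.I)) pzCirc :=
    hc (by fun_prop) ⟨1, fun x => (pz_norm_exp b x).le⟩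
  have i1 : Integrable (fun x : ℝ => (Real.cos x : ℂ)) pzCirc :=
    hc (by fun_prop) ⟨1, fun x => by
      rw [Complex.norm_real]; exact Real.abs_cos_le_one x⟩
  have i2 : Integrable (fun x : ℝ => ((Real.cos x ^ 2 : ℝ) : ℂ)) pzCirc :=
    hc (by fun_prop) ⟨1, fun x => by
      rw [Complex.norm_real, norm_pow]; exact pow_le_one₀ (norm_nonneg _) (Real.abs_cos_le_one x)⟩
  have i3 : Integrable (fun x : ℝ => (1 : ℂ) + (b * Complex.I) * (Real.cos x : ℂ)) pzCirc :=
    (integrable_const _).add (i1.const_mul _)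
  have i4 : Integrable (fun x : ℝ => ((b : ℂ) ^ 2 / 2) * ((Real.cos x ^ 2 : ℝ) : ℂ)) pzCirc :=
    i2.const_mul _
  have key : pzPhi b - (1 - (b : ℂ) ^ 2 / 4) =
      ∫ x : ℝ, (Complex.exp (b * Real.cos x * Complex.I) -
        ((1 + (b * Complex.I) * (Real.cos x : ℂ)) - ((b : ℂ) ^ 2 / 2) * ((Real.cos x ^ 2 : ℝ) : ℂ)))
        ∂pzCirc := by
    have i5 : Integrable (fun x : ℝ => (1 + (b * Complex.I) * (Real.cos x : ℂ)) -
        ((b : ℂ) ^ 2 / 2) * ((Real.cos x ^ 2 : ℝ) : ℂ)) pzCirc := i3.sub i4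
    rw [integral_sub i0 i5, integral_sub i3 i4,
      integral_add (integrable_const _) (i1.const_mul _), integral_const_mul, integral_const_mul,
      pzCirc_cos, pzCirc_cos_sq, pzPhi]
    simp
    ring
  rw [key]
  have := norm_integral_le_of_norm_le_const (μ := pzCirc)
    (f := fun x : ℝ => (Complex.exp (b * Real.cos x * Complex.I) -
        ((1 + (b * Complex.I) * (Real.cos x : ℂ)) - ((b : ℂ) ^ 2 / 2) * ((Real.cos x ^ 2 : ℝ) : ℂ))))
    (C := |b| ^ 3) (Eventually.of_forall fun x => ?_)
  · simpa using this
  · have hn : ‖(b * Real.cos x * Complex.I : ℂ)‖ ≤ |b| := by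
      rw [norm_mul, norm_mul, Complex.norm_I, mul_one, Complex.norm_real, Complex.norm_real]
      exact mul_le_of_le_one_right (abs_nonneg _) (Real.abs_cos_le_one x)
    have h3 := Complex.exp_bound (hn.trans hb) (n := 3) (by norm_num)
    have e : ∑ m ∈ Finset.range 3, (b * Real.cos x * Complex.I : ℂ) ^ m / (m.factorial : ℂ) =
        ((1 + (b * Complex.I) * (Real.cos x : ℂ)) -
          ((b : ℂ) ^ 2 / 2) * ((Real.cos x ^ 2 : ℝ) : ℂ)) := by
      simp only [Finset.sum_range_succ, Finset.sum_range_zero, Nat.factorial]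
      push_cast
      ring_nf
      rw [Complex.I_sq]
      ring
    rw [e] at h3
    refine h3.trans ?_
    have h4 : ‖(b * Real.cos x * Complex.I : ℂ)‖ ^ 3 ≤ |b| ^ 3 :=
      pow_le_pow_left₀ (norm_nonneg _) hn 3
    refine le_trans ?_ h4
    refine mul_le_of_le_one_right (by positivity) ?_
    norm_num [Nat.factorial]

lemma pz_exp_taylor (b : ℝ) (hb : |b| ≤ 1) :
    ‖(Real.exp (-(b ^ 2 / 4)) : ℂ) - (1 - (b : ℂ) ^ 2 / 4)‖ ≤ |b| ^ 3 := by
  have hb2 : b ^ 2 ≤ 1 := by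
    rw [← sq_abs]; exact pow_le_one₀ (abs_nonneg _) hb
  have h1 : ‖-(b ^ 2 / 4)‖ ≤ 1 := by
    rw [norm_neg, Real.norm_of_nonneg (by positivity)]; linarith
  have h2 := Real.norm_exp_sub_one_sub_id_le h1
  have e : (Real.exp (-(b ^ 2 / 4)) : ℂ) - (1 - (b : ℂ) ^ 2 / 4) =
      ((Real.exp (-(b ^ 2 / 4)) - 1 - (-(b ^ 2 / 4)) : ℝ) : ℂ) := by
    push_cast; ring
  rw [e, Complex.norm_real]
  refine h2.trans ?_
  rw [norm_neg, Real.norm_of_nonneg (by positivity), ← sq_abs b]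
  have h0 := abs_nonneg b
  have : (|b| ^ 2 / 4) ^ 2 = |b| ^ 3 * (|b| / 16) := by ring
  rw [this]
  exact mul_le_of_le_one_right (by positivity) (by linarith)

lemma pz_prod_diff {α : Type*} (s : Finset α) (f g : α → ℂ) (hf : ∀ i ∈ s, ‖f i‖ ≤ 1)
    (hg : ∀ i ∈ s, ‖g i‖ ≤ 1) :
    ‖∏ i ∈ s, f i - ∏ i ∈ s, g i‖ ≤ ∑ i ∈ s, ‖f i - g i‖ := by
  classical
  induction s using Finset.induction_on with
  | empty => simp
  | insert a s ha ih =>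
    rw [Finset.prod_insert ha, Finset.prod_insert ha, Finset.sum_insert ha]
    have ih' := ih (fun i hi => hf i (Finset.mem_insert_of_mem hi))
      (fun i hi => hg i (Finset.mem_insert_of_mem hi))
    have h1 : ‖f a‖ ≤ 1 := hf a (Finset.mem_insert_self _ _)
    have h2 : ‖∏ i ∈ s, g i‖ ≤ 1 := by
      rw [norm_prod]
      exact Finset.prod_le_one (fun _ _ => norm_nonneg _)
        fun i hi => hg i (Finset.mem_insert_of_mem hi)
    calc _ = ‖(f a - g a) * ∏ i ∈ s, g i + f a * (∏ i ∈ s, f i - ∏ i ∈ s, g i)‖ := by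
            congr 1; ring
      _ ≤ ‖f a - g a‖ * ‖∏ i ∈ s, g i‖ + ‖f a‖ * ‖∏ i ∈ s, f i - ∏ i ∈ s, g i‖ := by
            rw [← norm_mul, ← norm_mul]; exact norm_add_le _ _
      _ ≤ ‖f a - g a‖ + ‖∏ i ∈ s, f i - ∏ i ∈ s, g i‖ :=
            add_le_add (mul_le_of_le_one_right (norm_nonneg _) h2)
              (mul_le_of_le_one_left (norm_nonneg _) h1)
      _ ≤ _ := by linarith

/-- The normalisation. -/
noncomputable def pzSig (t : ℝ) : ℝ := Real.sqrt ((1 / 2) * Real.log (Real.log t))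

lemma pzSig_tendsto : Tendsto pzSig atTop atTop :=
  Real.tendsto_sqrt_atTop.comp (pz_loglog_tendsto.const_mul_atTop (by norm_num))

/-- The normalised coefficients. -/
noncomputable def pzA (t : ℝ) (p : primesUpTo t) : ℝ := 1 / Real.sqrt (p : ℕ) / pzSig t

lemma pz_charFun_clt (ξ : ℝ) : Tendsto (fun t => charFun (pzNu (pzA t)) ξ) atTop
    (nhds (Complex.exp (-(ξ : ℂ) ^ 2 / 2))) := by
  have hsum : Summable (fun n : ℕ => (1 / Real.sqrt n) ^ 3) := by
    have := Real.summable_one_div_nat_rpow (p := 3 / 2).2 (by norm_num)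
    refine this.congr fun n => ?_
    rw [div_pow, one_pow, Real.sqrt_eq_rpow, ← Real.rpow_natCast, ← Real.rpow_mul (by positivity)]
    norm_num
  set K := ∑' n : ℕ, (1 / Real.sqrt n) ^ 3 with hK
  set B : ℝ → ℕ → ℝ := fun t p => ξ * (1 / Real.sqrt p / pzSig t) with hB
  have e1 : ∀ t, charFun (pzNu (pzA t)) ξ = ∏ p ∈ primesUpTo t, pzPhi (B t p) := by
    intro t
    rw [pzNu_charFun]
    exact Finset.prod_coe_sort (primesUpTo t) (fun p => pzPhi (B t p))
  have hmain : Tendsto (fun t => ∏ p ∈ primesUpTo t, (Real.exp (-(B t p ^ 2 / 4)) : ℂ)) atTop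
      (nhds (Complex.exp (-(ξ : ℂ) ^ 2 / 2))) := by
    have h1 : Tendsto (fun t : ℝ => Real.exp (-(ξ ^ 2 / 2 *
        ((∑ p ∈ primesUpTo t, (1 / (p : ℝ))) / Real.log (Real.log t))))) atTop
        (nhds (Real.exp (-(ξ ^ 2 / 2 * 1)))) :=
      (Real.continuous_exp.tendsto _).comp (pz_mertens.const_mul _).neg
    have h2 := (Complex.continuous_ofReal.tendsto _).comp h1
    have e3 : ((Real.exp (-(ξ ^ 2 / 2 * 1)) : ℝ) : ℂ) = Complex.exp (-(ξ : ℂ) ^ 2 / 2) := by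
      push_cast; congr 1; ring
    rw [e3] at h2
    refine h2.congr' ?_
    filter_upwards [pz_loglog_tendsto.eventually_gt_atTop 0] with t ht
    simp only [Function.comp]
    rw [← Complex.ofReal_prod, ← Real.exp_sum]
    congr 2
    rw [Finset.sum_div, Finset.mul_sum, ← Finset.sum_neg_distrib]
    refine Finset.sum_congr rfl fun p hp => ?_
    have hp0 : (0 : ℝ) < p := by
      have : p.Prime := (Finset.mem_filter.1 hp).2
      exact_mod_cast this.pos
    simp only [hB, pzSig]
    rw [mul_pow, div_pow, div_pow, Real.sq_sqrt hp0.le, Real.sq_sqrt (by positivity)]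
    field_simp
    norm_num
  have hdiff : Tendsto (fun t => ∏ p ∈ primesUpTo t, pzPhi (B t p) -
      ∏ p ∈ primesUpTo t, (Real.exp (-(B t p ^ 2 / 4)) : ℂ)) atTop (nhds 0) := by
    have h1 : Tendsto (fun t : ℝ => (2 * |ξ| ^ 3 * K) / (pzSig t) ^ 3) atTop (nhds 0) :=
      tendsto_const_nhds.div_atTop ((tendsto_pow_atTop (by norm_num)).comp pzSig_tendsto)
    refine squeeze_zero_norm' ?_ h1
    filter_upwards [pzSig_tendsto.eventually_ge_atTop (|ξ| + 1)] with t ht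
    have hs0 : 0 < pzSig t := by linarith [abs_nonneg ξ]
    refine (pz_prod_diff _ _ _ (fun i _ => pzPhi_norm _) (fun i _ => ?_)).trans ?_
    · rw [Complex.norm_real, Real.norm_of_nonneg (Real.exp_pos _).le]
      exact Real.exp_le_one_iff.2 (by have := sq_nonneg (B t i); linarith)
    have hBabs : ∀ p, |B t p| = |ξ| * (1 / Real.sqrt p / pzSig t) := by
      intro p
      simp only [hB]
      rw [abs_mul, abs_of_nonneg (a := 1 / Real.sqrt p / pzSig t) (by positivity)]
    have hterm : ∀ p ∈ primesUpTo t, ‖pzPhi (B t p) - (Real.exp (-(B t p ^ 2 / 4)) : ℂ)‖ ≤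
        (2 * |ξ| ^ 3 / pzSig t ^ 3) * (1 / Real.sqrt p) ^ 3 := by
      intro p hp
      have hpp : p.Prime := (Finset.mem_filter.1 hp).2
      have hp1 : (1 : ℝ) ≤ p := by exact_mod_cast hpp.one_le
      have hB1 : |B t p| ≤ 1 := by
        rw [hBabs]
        have h5 : 1 / Real.sqrt p ≤ 1 := by
          rw [div_le_one (by positivity)]; exact Real.one_le_sqrt.2 hp1
        calc _ ≤ |ξ| * (1 / pzSig t) := by gcongr
          _ ≤ 1 := by rw [mul_one_div, div_le_one hs0]; linarith
      have h6 := pzPhi_taylor _ hB1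
      have h7 := pz_exp_taylor _ hB1
      have h8 : |B t p| ^ 3 = |ξ| ^ 3 / pzSig t ^ 3 * (1 / Real.sqrt p) ^ 3 := by
        rw [hBabs]; ring
      calc _ = ‖(pzPhi (B t p) - (1 - (B t p : ℂ) ^ 2 / 4)) -
            ((Real.exp (-(B t p ^ 2 / 4)) : ℂ) - (1 - (B t p : ℂ) ^ 2 / 4))‖ := by congr 1; ring
        _ ≤ |B t p| ^ 3 + |B t p| ^ 3 := (norm_sub_le _ _).trans (add_le_add h6 h7)
        _ = _ := by rw [h8]; ring
    refine (Finset.sum_le_sum hterm).trans ?_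
    rw [← Finset.mul_sum]
    have h9 : ∑ p ∈ primesUpTo t, (1 / Real.sqrt (p : ℝ)) ^ 3 ≤ K :=
      hsum.sum_le_tsum _ (fun n _ => by positivity)
    calc _ ≤ (2 * |ξ| ^ 3 / pzSig t ^ 3) * K := by gcongr
      _ = _ := by ring
  have := hdiff.add hmain
  simp only [sub_add_cancel, zero_add] at this
  simpa only [e1] using this

lemma pz_clt (x : ℝ) : Tendsto (fun t => (pzNu (pzA t) (Set.Iic x)).toReal) atTop
    (nhds (stdNormalCDF x)) := by
  have hN : (ProbabilityTheory.gaussianReal 0 1 (Set.Iic x)).toReal = stdNormalCDF x := by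
    rw [ProbabilityTheory.gaussianReal_apply_eq_integral 0 (by norm_num), ENNReal.toReal_ofReal
      (integral_nonneg fun u => ProbabilityTheory.gaussianPDFReal_nonneg _ _ _), stdNormalCDF,
      ← integral_const_mul]
    refine integral_congr_ae (Eventually.of_forall fun u => ?_)
    simp [ProbabilityTheory.gaussianPDFReal]
  rw [← hN]
  refine (ENNReal.tendsto_toReal (measure_ne_top _ _)).comp ?_
  refine tendsto_of_seq_tendsto fun u hu => ?_
  have := ProbabilityMeasure.tendsto_of_tendsto_charFun
    (μ := fun n => (⟨pzNu (pzA (u n)), inferInstance⟩ : ProbabilityMeasure ℝ))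
    (μ₀ := ⟨ProbabilityTheory.gaussianReal 0 1, inferInstance⟩)
    (fun ξ => by
      have h := (pz_charFun_clt ξ).comp hu
      simp only [ProbabilityMeasure.coe_mk, ProbabilityTheory.charFun_gaussianReal]
      convert! h using 2
      congr 1
      simp
      ring)
  refine ProbabilityMeasure.tendsto_measure_of_null_frontier_of_tendsto' this ?_
  rw [frontier_Iic]
  have : NullSingletonClass (ProbabilityTheory.gaussianReal 0 1) :=
    ProbabilityTheory.nullSingletonClass_gaussianReal (by norm_num)
  exact measure_singleton (μ := ProbabilityTheory.gaussianReal 0 1) x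

lemma pz_re (t τ : ℝ) : (primeZetaTrunc t τ).re =
    ∑ p ∈ primesUpTo t, 1 / Real.sqrt p * Real.cos (τ * Real.log p) := by
  rw [primeZetaTrunc, Complex.re_sum]
  refine Finset.sum_congr rfl fun p hp => ?_
  have hpp : p.Prime := (Finset.mem_filter.1 hp).2
  have hp0 : (0 : ℝ) < p := by exact_mod_cast hpp.pos
  have hne : (p : ℂ) ≠ 0 := by exact_mod_cast hpp.ne_zero
  rw [Complex.cpow_def_of_ne_zero hne, Complex.natCast_log.symm, Complex.exp_re]
  have h1 : ∀ l : ℝ, ((l : ℂ) * (-(1 / 2 + Complex.I * (τ : ℂ)))).re = -(l / 2) := by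
    intro l; simp; ring
  have h2 : ∀ l : ℝ, ((l : ℂ) * (-(1 / 2 + Complex.I * (τ : ℂ)))).im = -(τ * l) := by
    intro l; simp; ring
  rw [h1, h2, Real.cos_neg, Real.exp_neg, Real.sqrt_eq_rpow, Real.rpow_def_of_pos hp0]
  rw [one_div, mul_one_div]

theorem stmt7 (x : ℝ) :
    ∃ L : ℝ → ℝ,
      (∀ᶠ t in (atTop : Filter ℝ),
        Tendsto
          (fun T : ℝ => (1 / T) *
            (volume {τ : ℝ | τ ∈ Set.Icc T (2 * T) ∧
              (primeZetaTrunc t τ).re ≤ x * Real.sqrt ((1 / 2) * Real.log (Real.log t))}).toReal)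
          atTop (nhds (L t))) ∧
      Tendsto L atTop (nhds (stdNormalCDF x)) := by
  refine ⟨fun t => (pzNu (pzA t) (Set.Iic x)).toReal, ?_, pz_clt x⟩
  filter_upwards [eventually_ge_atTop 2, pzSig_tendsto.eventually_gt_atTop 0] with t ht hs
  have hprime : ∀ p ∈ primesUpTo t, p.Prime := fun p hp => (Finset.mem_filter.1 hp).2
  have h2 : 2 ∈ primesUpTo t := by
    refine Finset.mem_filter.2 ⟨Finset.mem_range.2 ?_, Nat.prime_two⟩
    have : 2 ≤ ⌊t⌋₊ := Nat.le_floor (by exact_mod_cast ht)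
    omega
  have hj : pzA t ⟨2, h2⟩ ≠ 0 := by
    have : (0 : ℝ) < Real.sqrt ((2 : ℕ) : ℝ) := by positivity
    exact (div_pos (div_pos one_pos this) hs).ne'
  have key := pz_kw (fun p : primesUpTo t => Real.log (p : ℕ)) (pz_log_indep _ hprime) (pzA t)
    ⟨2, h2⟩ hj x
  have e : ∀ τ : ℝ, ((primeZetaTrunc t τ).re ≤ x * Real.sqrt ((1 / 2) * Real.log (Real.log t))) ↔
      pzX (pzA t) (fun p : primesUpTo t => τ * Real.log (p : ℕ)) ≤ x := by
    intro τ
    have e1 : pzX (pzA t) (fun p : primesUpTo t => τ * Real.log (p : ℕ)) =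
        (primeZetaTrunc t τ).re / pzSig t := by
      rw [pz_re, pzX, Finset.sum_div, ← Finset.sum_coe_sort (primesUpTo t)]
      refine Finset.sum_congr rfl fun p _ => ?_
      rw [pzA]; ring
    rw [e1, div_le_iff₀ hs]
    rfl
  simp_rw [e]
  exact key
end

section
/- For every real Δ ≠ 0, the limit lim_{t→∞} ∑_{p ≤ t, p prime} p^{-(1+iΔ)} exists (as a complex number); that is, the prime zeta function P(1+iΔ), defined as the limit of its partial sums over primes in increasing order, converges everywhere on the 1-line except at Δ = 0. -/
open Filter

lemma aux_abel (a f : ℕ → ℝ) (C : ℝ) (ha : ∀ n, 0 ≤ a n)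
    (hA : ∀ n : ℕ, ∑ k ∈ Finset.range (n + 1), a k ≤ C * n)
    (N : ℕ) (hf0 : ∀ n, 0 ≤ f n) (hf : ∀ n, N ≤ n → f (n + 1) ≤ f n) (M : ℕ) (hM : N ≤ M) :
    ∑ n ∈ Finset.Ioc N M, a n * f n ≤ C * (N * f N + ∑ n ∈ Finset.Ioc N M, f n) := by
  have key : ∑ n ∈ Finset.Ioc N M, a n * f n +
      (C * M - ∑ k ∈ Finset.range (M + 1), a k) * f M ≤
      C * (N * f N + ∑ n ∈ Finset.Ioc N M, f n) := by
    induction M, hM using Nat.le_induction with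
    | base =>
      simp only [Finset.Ioc_self, Finset.sum_empty, zero_add, add_zero]
      have := mul_nonneg (Finset.sum_nonneg (fun k (_ : k ∈ Finset.range (N + 1)) => ha k)) (hf0 N)
      nlinarith
    | succ M hM ih =>
      rw [Finset.sum_Ioc_succ_top (by omega), Finset.sum_Ioc_succ_top (by omega),
        Finset.sum_range_succ]
      have h1 := hA M
      have h2 := hf M hM
      have := mul_nonneg (sub_nonneg.2 h1) (sub_nonneg.2 h2)
      push_cast
      nlinarith
  have := mul_nonneg (sub_nonneg.2 (hA M)) (hf0 M)
  linarith

lemma aux_tan_pos (n : ℕ) (u : ℝ) (hu0 : 0 ≤ u) (hu : u ≤ 1) :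
    u * ((n + 1 : ℕ) : ℝ) ^ (u - 1) ≤ ((n + 1 : ℕ) : ℝ) ^ u - (n : ℝ) ^ u := by
  have hm : (0 : ℝ) < ((n + 1 : ℕ) : ℝ) := by positivity
  have h1 : (1 : ℝ) ≤ ((n + 1 : ℕ) : ℝ) := by push_cast; linarith [n.cast_nonneg (α := ℝ)]
  have hb := rpow_one_add_le_one_add_mul_self (s := -(((n + 1 : ℕ) : ℝ))⁻¹)
    (by linarith [inv_le_one_of_one_le₀ h1]) hu0 hu
  have hq : 1 + -(((n + 1 : ℕ) : ℝ))⁻¹ = (n : ℝ) / ((n + 1 : ℕ) : ℝ) := by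
    field_simp; push_cast; ring
  rw [hq, Real.div_rpow (by positivity) hm.le, div_le_iff₀ (by positivity)] at hb
  rw [Real.rpow_sub_one hm.ne']
  have : (1 + u * -(((n + 1 : ℕ) : ℝ))⁻¹) * ((n + 1 : ℕ) : ℝ) ^ u =
    ((n + 1 : ℕ) : ℝ) ^ u - u * (((n + 1 : ℕ) : ℝ) ^ u / ((n + 1 : ℕ) : ℝ)) := by
    field_simp; ring
  linarith

lemma aux_tan_neg (n : ℕ) (hn : 1 ≤ n) (x : ℝ) (hx0 : 0 ≤ x) (hx : x ≤ 1) :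
    x * ((n + 1 : ℕ) : ℝ) ^ (-x - 1) ≤ (n : ℝ) ^ (-x) - ((n + 1 : ℕ) : ℝ) ^ (-x) := by
  have hm : (0 : ℝ) < ((n + 1 : ℕ) : ℝ) := by positivity
  have hn' : (0 : ℝ) < (n : ℝ) := by exact_mod_cast hn
  have h := aux_tan_pos n x hx0 hx
  rw [Real.rpow_sub_one hm.ne'] at h ⊢
  rw [Real.rpow_neg hm.le, Real.rpow_neg hn'.le]
  have ha : 0 < ((n + 1 : ℕ) : ℝ) ^ x := by positivity
  have hb : 0 < (n : ℝ) ^ x := by positivity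
  set A := ((n + 1 : ℕ) : ℝ) ^ x
  set B := (n : ℝ) ^ x
  set m := ((n + 1 : ℕ) : ℝ)
  have hc : 0 ≤ x / m := by positivity
  have e1 : x * (A / m) = A * (x / m) := by ring
  have e2 : x * (A⁻¹ / m) = A⁻¹ * (x / m) := by ring
  rw [e1] at h
  rw [e2]
  set c := x / m
  have : A⁻¹ * (1 + c) ≤ B⁻¹ := by
    rw [inv_mul_eq_div, div_le_iff₀ ha, inv_mul_eq_div, le_div_iff₀ hb]
    nlinarith [mul_nonneg hc (mul_nonneg hc ha.le)]
  linarith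

lemma aux_sum_pos (u : ℝ) (hu0 : 0 ≤ u) (hu : u ≤ 1) (N M : ℕ) (h : N ≤ M) :
    u * ∑ n ∈ Finset.Ioc N M, (n : ℝ) ^ (u - 1) ≤ (M : ℝ) ^ u - (N : ℝ) ^ u := by
  induction M, h using Nat.le_induction with
  | base => simp
  | succ M hM ih =>
    rw [Finset.sum_Ioc_succ_top (by omega), mul_add]
    have := aux_tan_pos M u hu0 hu
    linarith

lemma aux_sum_neg (x : ℝ) (hx0 : 0 ≤ x) (hx : x ≤ 1) (N M : ℕ) (hN : 1 ≤ N) (h : N ≤ M) :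
    x * ∑ n ∈ Finset.Ioc N M, (n : ℝ) ^ (-x - 1) ≤ (N : ℝ) ^ (-x) - (M : ℝ) ^ (-x) := by
  induction M, h using Nat.le_induction with
  | base => simp
  | succ M hM ih =>
    rw [Finset.sum_Ioc_succ_top (by omega), mul_add]
    have := aux_tan_neg M (by omega) x hx0 hx
    linarith

lemma aux_psi (n : ℕ) : ∑ k ∈ Finset.range (n + 1), ArithmeticFunction.vonMangoldt k ≤
    (Real.log 4 + 4) * n := by
  have := Chebyshev.psi_le_const_mul_self (x := (n : ℝ)) (by positivity)
  rwa [Chebyshev.psi_eq_sum_Icc, Nat.floor_natCast, ← Nat.range_succ_eq_Icc_zero] at this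

lemma aux_anti (e : ℝ) (he : e ≤ 0) (n : ℕ) (hn : 1 ≤ n) :
    ((n + 1 : ℕ) : ℝ) ^ e ≤ (n : ℝ) ^ e :=
  Real.rpow_le_rpow_of_nonpos (by exact_mod_cast hn) (by push_cast; linarith) he

/-- right half -/
lemma aux_right (x : ℝ) (hx0 : 0 ≤ x) (hx : x ≤ 1) (N M : ℕ) (hN : 1 ≤ N) (h : N ≤ M) :
    x * ∑ n ∈ Finset.Ioc N M, ArithmeticFunction.vonMangoldt n * (n : ℝ) ^ (-x - 1) ≤
      2 * (Real.log 4 + 4) * (N : ℝ) ^ (-x) := by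
  have hC : 0 ≤ Real.log 4 + 4 := by positivity
  have h1 := aux_abel ArithmeticFunction.vonMangoldt (fun n => (n : ℝ) ^ (-x - 1))
    (Real.log 4 + 4) (fun _ => ArithmeticFunction.vonMangoldt_nonneg) aux_psi N
    (fun n => by positivity) (fun n hn => aux_anti _ (by linarith) n (by omega)) M h
  have h2 := aux_sum_neg x hx0 hx N M hN h
  have hN' : (0 : ℝ) < N := by exact_mod_cast hN
  have e : (N : ℝ) * (N : ℝ) ^ (-x - 1) = (N : ℝ) ^ (-x) := by
    rw [Real.rpow_sub_one hN'.ne']; field_simp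
  simp only [e] at h1
  have hp : 0 ≤ (N : ℝ) ^ (-x) := by positivity
  have hp2 : 0 ≤ (M : ℝ) ^ (-x) := by positivity
  calc _ ≤ x * _ := mul_le_mul_of_nonneg_left h1 hx0
    _ = (Real.log 4 + 4) * (x * (N : ℝ) ^ (-x) +
        x * ∑ n ∈ Finset.Ioc N M, (n : ℝ) ^ (-x - 1)) := by ring
    _ ≤ (Real.log 4 + 4) * (2 * (N : ℝ) ^ (-x)) := by
        apply mul_le_mul_of_nonneg_left _ hC
        nlinarith
    _ = _ := by ring

lemma aux_left (u : ℝ) (hu0 : 0 ≤ u) (hu : u ≤ 1) (N : ℕ) (hN : 1 ≤ N) :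
    u * ∑ n ∈ Finset.range (N + 1), ArithmeticFunction.vonMangoldt n * (n : ℝ) ^ (u - 1) ≤
      (Real.log 4 + 4) * (N : ℝ) ^ u := by
  have hC : 0 ≤ Real.log 4 + 4 := by positivity
  have h1 := aux_abel ArithmeticFunction.vonMangoldt (fun n => (n : ℝ) ^ (u - 1))
    (Real.log 4 + 4) (fun _ => ArithmeticFunction.vonMangoldt_nonneg) aux_psi 1
    (fun n => by positivity) (fun n hn => aux_anti _ (by linarith) n (by omega)) N hN
  have h2 := aux_sum_pos u hu0 hu 1 N hN
  have e : ∑ n ∈ Finset.range (N + 1), ArithmeticFunction.vonMangoldt n * (n : ℝ) ^ (u - 1) =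
      ∑ n ∈ Finset.Ioc 1 N, ArithmeticFunction.vonMangoldt n * (n : ℝ) ^ (u - 1) := by
    symm
    apply Finset.sum_subset
    · intro n hn; simp at hn ⊢; omega
    · intro n hn hn'
      have : n = 0 ∨ n = 1 := by simp at hn hn'; omega
      rcases this with rfl | rfl <;> simp
  rw [e]
  simp only [Nat.cast_one, Real.one_rpow, mul_one] at h1 h2
  calc _ ≤ u * _ := mul_le_mul_of_nonneg_left h1 hu0
    _ = (Real.log 4 + 4) * (u + u * ∑ n ∈ Finset.Ioc 1 N, (n : ℝ) ^ (u - 1)) := by ring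
    _ ≤ _ := by
        apply mul_le_mul_of_nonneg_left _ hC
        linarith

noncomputable def auxL (n : ℕ) : ℂ := (ArithmeticFunction.vonMangoldt n : ℂ)

lemma aux_norm_term (s : ℂ) (n : ℕ) : ‖LSeries.term auxL s n‖ =
    ArithmeticFunction.vonMangoldt n * (n : ℝ) ^ (-s.re) := by
  rw [LSeries.norm_term_eq]
  split_ifs with h
  · simp [h]
  · rw [Real.rpow_neg (by positivity), ← div_eq_mul_inv, auxL, Complex.norm_real,
      Real.norm_of_nonneg ArithmeticFunction.vonMangoldt_nonneg]

lemma aux_sphere (R : ℝ) (hR : 0 < R) (z : ℂ) (hz : ‖z‖ = R) :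
    ‖1 + (z / R) ^ 2‖ = 2 / R * |z.re| := by
  have hR' : (R : ℂ) ≠ 0 := by exact_mod_cast hR.ne'
  have h1 : (R : ℂ) ^ 2 = z * (starRingEnd ℂ) z := by
    rw [Complex.mul_conj, Complex.normSq_eq_norm_sq, hz]; push_cast; rfl
  have h2 : 1 + (z / R) ^ 2 = z * ((2 * z.re : ℝ) : ℂ) / (R : ℂ) ^ 2 := by
    rw [← Complex.add_conj, mul_add, ← h1]; field_simp; ring
  rw [h2, norm_div, norm_mul, hz, norm_pow, Complex.norm_real, Complex.norm_real, Real.norm_eq_abs,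
    Real.norm_eq_abs, abs_of_pos hR, abs_mul, abs_two]
  field_simp

lemma aux_bounded (s₀ : ℂ) (hs₀ : s₀.re = 1) (h1 : s₀ ≠ 1) :
    ∃ B : ℝ, ∀ N : ℕ, ‖∑ n ∈ Finset.range N, LSeries.term auxL s₀ n‖ ≤ B := by
  set F : ℂ → ℂ := fun s => -deriv riemannZeta s / riemannZeta s with hF
  set U : Set ℂ := {s | s ≠ 1} with hU
  have hUo : IsOpen U := isOpen_ne
  have hd : DifferentiableOn ℂ riemannZeta U :=
    fun s hs => (differentiableAt_riemannZeta hs).differentiableWithinAt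
  have hz0 : riemannZeta s₀ ≠ 0 := riemannZeta_ne_zero_of_one_le_re hs₀.ge
  have hev : ∀ᶠ s in nhds s₀, s ≠ 1 ∧ riemannZeta s ≠ 0 :=
    (hUo.eventually_mem h1).and ((differentiableAt_riemannZeta h1).continuousAt.eventually_ne hz0)
  obtain ⟨ε, hε, hball⟩ := Metric.eventually_nhds_iff_ball.1 hev
  obtain ⟨R, hR0, hRε, hR1⟩ : ∃ R : ℝ, 0 < R ∧ R < ε ∧ R ≤ 1 :=
    ⟨min (ε / 2) 1, by positivity, (min_le_left _ _).trans_lt (by linarith), min_le_right _ _⟩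
  have hFd : DifferentiableOn ℂ F (Metric.ball s₀ ε) := by
    intro s hs
    obtain ⟨ha, hb⟩ := hball s hs
    have h2 : DifferentiableAt ℂ (deriv riemannZeta) s :=
      (hd.deriv hUo).differentiableAt (hUo.mem_nhds ha)
    exact (h2.neg.div (differentiableAt_riemannZeta ha) hb).differentiableWithinAt
  have hsub : Metric.closedBall s₀ R ⊆ Metric.ball s₀ ε := Metric.closedBall_subset_ball hRε
  obtain ⟨B, hB⟩ := (isCompact_closedBall s₀ R).exists_bound_of_continuousOn
    (hFd.continuousOn.mono hsub)
  have hB0 : 0 ≤ B := (norm_nonneg _).trans (hB s₀ (Metric.mem_closedBall_self hR0.le))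
  have hC : 0 ≤ Real.log 4 + 4 := by positivity
  set C := Real.log 4 + 4 with hCdef
  have main : ∀ N : ℕ, 1 ≤ N →
      ‖F s₀ - ∑ n ∈ Finset.range (N + 1), LSeries.term auxL s₀ n‖ ≤ 2 / R * (B + 2 * C) := by
    intro N hN
    have hNpos : (0 : ℝ) < N := by exact_mod_cast hN
    have hN0 : (N : ℂ) ≠ 0 := by exact_mod_cast hNpos.ne'
    set S : ℂ → ℂ := fun s => ∑ n ∈ Finset.range (N + 1), LSeries.term auxL s n with hS
    have hSd : Differentiable ℂ S := by
      apply Differentiable.fun_sum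
      intro n _
      simp only [LSeries.term_def]
      split_ifs with h
      · fun_prop
      · have hn : (n : ℂ) ≠ 0 := by exact_mod_cast h
        have : Differentiable ℂ fun s : ℂ => (n : ℂ) ^ s :=
          fun s => differentiableAt_id.const_cpow (Or.inl hn)
        exact (differentiable_const _).div this (fun s => by simp [Complex.cpow_eq_zero_iff, hn])
    set h : ℂ → ℂ := fun s => (F s - S s) * (N : ℂ) ^ (s - s₀) * (1 + ((s - s₀) / R) ^ 2) with hh
    have hpow : Differentiable ℂ fun s : ℂ => (N : ℂ) ^ (s - s₀) :=
      fun s => (differentiableAt_id.sub_const s₀).const_cpow (Or.inl hN0)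
    have hhd : DifferentiableOn ℂ h (Metric.closedBall s₀ R) :=
      (((hFd.mono hsub).sub hSd.differentiableOn).mul hpow.differentiableOn).mul
        (by fun_prop)
    have hdc : DiffContOnCl ℂ h (Metric.ball s₀ R) := by
      apply DifferentiableOn.diffContOnCl
      rwa [closure_ball _ hR0.ne']
    have hfr : ∀ s ∈ frontier (Metric.ball s₀ R), ‖h s‖ ≤ 2 / R * (B + 2 * C) := by
      intro s hs
      rw [frontier_ball _ hR0.ne', mem_sphere_iff_norm] at hs
      set x := s.re - 1 with hx
      have hxre : (s - s₀).re = x := by simp [hs₀, hx]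
      have hxabs : |x| ≤ 1 := by
        rw [← hxre]; exact (Complex.abs_re_le_norm _).trans (hs ▸ hR1)
      have hsb : ‖F s‖ ≤ B := hB s (by simp [dist_eq_norm, hs])
      have hn : ‖h s‖ = 2 / R * (|x| * (N : ℝ) ^ x * ‖F s - S s‖) := by
        rw [hh]
        simp only [norm_mul]
        rw [aux_sphere R hR0 _ hs, Complex.norm_natCast_cpow_of_pos hN, hxre]
        ring
      rw [hn]
      apply mul_le_mul_of_nonneg_left _ (by positivity)
      have hNx : 0 < (N : ℝ) ^ x := by positivity
      rcases lt_or_ge 0 x with hx0 | hx0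
      · rw [abs_of_pos hx0] at hxabs ⊢
        have hs1 : 1 < s.re := by linarith
        have hsum := (ArithmeticFunction.LSeriesSummable_vonMangoldt hs1).LSeriesHasSum
        rw [ArithmeticFunction.LSeries_vonMangoldt_eq_deriv_riemannZeta_div hs1] at hsum
        have ht : Tendsto (fun M => ∑ n ∈ Finset.range M, LSeries.term auxL s n) atTop
          (nhds (F s)) := HasSum.tendsto_sum_nat hsum
        have hle : ‖F s - S s‖ ≤ 2 * C * (N : ℝ) ^ (-x) / x := by
          refine le_of_tendsto (((tendsto_add_atTop_iff_nat 1).2 ht).sub_const (S s)).norm ?_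
          filter_upwards [eventually_ge_atTop N] with M hM
          have e : ∑ n ∈ Finset.range (M + 1), LSeries.term auxL s n - S s =
              ∑ n ∈ Finset.Ioc N M, LSeries.term auxL s n := by
            rw [hS, ← Finset.sum_Ico_eq_sub _ (by omega)]
            apply Finset.sum_congr _ (fun _ _ => rfl)
            ext; simp only [Finset.mem_Ico, Finset.mem_Ioc]; omega
          rw [e, le_div_iff₀ hx0, mul_comm]
          refine le_trans ?_ (aux_right x hx0.le hxabs N M hN hM)
          apply mul_le_mul_of_nonneg_left _ hx0.le
          refine (norm_sum_le _ _).trans (le_of_eq ?_)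
          apply Finset.sum_congr rfl
          intro n _
          rw [aux_norm_term]
          congr 2
          rw [hx]; ring
        calc x * (N : ℝ) ^ x * ‖F s - S s‖ ≤ x * (N : ℝ) ^ x * (2 * C * (N : ℝ) ^ (-x) / x) := by
              gcongr
          _ = 2 * C := by rw [Real.rpow_neg hNpos.le]; field_simp
          _ ≤ _ := by linarith
      · rw [abs_of_nonpos hx0] at hxabs ⊢
        have hl := aux_left (-x) (by linarith) hxabs N hN
        have hSn : (-x) * ‖S s‖ ≤ C * (N : ℝ) ^ (-x) := by
          refine le_trans ?_ hl
          apply mul_le_mul_of_nonneg_left _ (by linarith)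
          refine (norm_sum_le _ _).trans (le_of_eq ?_)
          apply Finset.sum_congr rfl
          intro n _
          rw [aux_norm_term]
          congr 2
          rw [hx]; ring
        have hNx1 : (N : ℝ) ^ x ≤ 1 :=
          Real.rpow_le_one_of_one_le_of_nonpos (by exact_mod_cast hN) hx0
        have hinv : (N : ℝ) ^ x * (N : ℝ) ^ (-x) = 1 := by
          rw [← Real.rpow_add hNpos]; simp
        have hx0' : 0 ≤ -x := by linarith
        calc -x * (N : ℝ) ^ x * ‖F s - S s‖ ≤ -x * (N : ℝ) ^ x * (‖F s‖ + ‖S s‖) := by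
              gcongr; exact norm_sub_le _ _
          _ = -x * (N : ℝ) ^ x * ‖F s‖ + (N : ℝ) ^ x * (-x * ‖S s‖) := by ring
          _ ≤ 1 * 1 * B + (N : ℝ) ^ x * (C * (N : ℝ) ^ (-x)) := by gcongr
          _ = B + C * ((N : ℝ) ^ x * (N : ℝ) ^ (-x)) := by ring
          _ ≤ _ := by rw [hinv]; linarith
    have := Complex.norm_le_of_forall_mem_frontier_norm_le Metric.isBounded_ball hdc hfr
      (subset_closure (Metric.mem_ball_self hR0))
    simpa [hh] using this
  refine ⟨‖F s₀‖ + 2 / R * (B + 2 * C), fun N => ?_⟩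
  have hpos : 0 ≤ ‖F s₀‖ + 2 / R * (B + 2 * C) := by positivity
  rcases lt_or_ge N 2 with hN | hN
  · interval_cases N <;> simp <;> linarith
  · obtain ⟨M, rfl⟩ : ∃ M, N = M + 1 := ⟨N - 1, by omega⟩
    have := main M (by omega)
    have h3 := norm_sub_norm_le (∑ n ∈ Finset.range (M + 1), LSeries.term auxL s₀ n) (F s₀)
    rw [norm_sub_rev] at h3
    linarith

lemma aux_bounded_prime (s₀ : ℂ) (hs₀ : s₀.re = 1) (h1 : s₀ ≠ 1) :
    ∃ B : ℝ, ∀ N : ℕ,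
      ‖∑ n ∈ Finset.range N, (if n.Prime then LSeries.term auxL s₀ n else 0)‖ ≤ B := by
  obtain ⟨B, hB⟩ := aux_bounded s₀ hs₀ h1
  have hs := ArithmeticFunction.vonMangoldt.summable_residueClass_non_primes_div (q := 1) 0
  set g : ℕ → ℝ := fun n => (if Nat.Prime n then 0 else
    ArithmeticFunction.vonMangoldt.residueClass (0 : ZMod 1) n) / (n : ℝ) with hg
  have hg0 : ∀ n, 0 ≤ g n := fun n => by
    simp only [hg]
    have := ArithmeticFunction.vonMangoldt.residueClass_nonneg (0 : ZMod 1) n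
    split_ifs <;> positivity
  refine ⟨B + ∑' n, g n, fun N => ?_⟩
  have e : ∑ n ∈ Finset.range N, (if n.Prime then LSeries.term auxL s₀ n else 0) =
      ∑ n ∈ Finset.range N, LSeries.term auxL s₀ n -
      ∑ n ∈ Finset.range N, (if n.Prime then 0 else LSeries.term auxL s₀ n) := by
    rw [← Finset.sum_sub_distrib]
    apply Finset.sum_congr rfl
    intro n _
    split_ifs <;> simp
  rw [e]
  refine (norm_sub_le _ _).trans (add_le_add (hB N) ?_)
  refine (norm_sum_le _ _).trans (le_trans (Finset.sum_le_sum ?_)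
    (hs.sum_le_tsum (Finset.range N) (fun n _ => hg0 n)))
  intro n _
  split_ifs with h
  · rw [norm_zero]; exact hg0 n
  · rw [aux_norm_term, hs₀]
    simp only [hg, h, if_false]
    rw [Real.rpow_neg_one, div_eq_mul_inv]
    simp [ArithmeticFunction.vonMangoldt.residueClass, Set.indicator, Subsingleton.elim _ (0 : ZMod 1)]

theorem stmt9 (Δ : ℝ) (hΔ : Δ ≠ 0) :
    ∃ L : ℂ,
      Tendsto (fun t : ℝ => ∑ p ∈ primesUpTo t, (p : ℂ) ^ (-(1 + Complex.I * (Δ : ℂ))))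
        atTop (nhds L) := by
  set s₀ : ℂ := 1 + Complex.I * (Δ : ℂ) with hs
  have hre : s₀.re = 1 := by simp [hs]
  have hne : s₀ ≠ 1 := by simp [hs, hΔ]
  obtain ⟨B, hB⟩ := aux_bounded_prime s₀ hre hne
  set b : ℕ → ℂ := fun n => if n.Prime then LSeries.term auxL s₀ n else 0 with hb
  have hpos : ∀ n : ℕ, 0 < Real.log ((n + 2 : ℕ) : ℝ) := fun n =>
    Real.log_pos (by push_cast; linarith [n.cast_nonneg (α := ℝ)])
  have hanti : Antitone (fun n : ℕ => (Real.log ((n + 2 : ℕ) : ℝ))⁻¹) := by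
    intro m n hmn
    apply inv_anti₀ (hpos m)
    apply Real.log_le_log (by positivity)
    exact_mod_cast (by omega : m + 2 ≤ n + 2)
  have hlim : Tendsto (fun n : ℕ => (Real.log ((n + 2 : ℕ) : ℝ))⁻¹) atTop (nhds 0) :=
    tendsto_inv_atTop_zero.comp (Real.tendsto_log_atTop.comp
      (tendsto_natCast_atTop_atTop.comp (tendsto_add_atTop_nat 2)))
  have hbd : ∀ n : ℕ, ‖∑ i ∈ Finset.range n, b (i + 2)‖ ≤ B := by
    intro n
    have := hB (n + 2)
    rw [Finset.sum_range_succ' b, Finset.sum_range_succ' (fun k => b (k + 1))] at this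
    have e0 : b 0 = 0 := by simp [hb, Nat.not_prime_zero]
    have e1 : b (0 + 1) = 0 := by simp [hb, Nat.not_prime_one]
    rw [e0, e1, add_zero, add_zero] at this
    exact this
  obtain ⟨L, hL⟩ := cauchySeq_tendsto_of_complete
    (hanti.cauchySeq_series_mul_of_tendsto_zero_of_bounded hlim hbd)
  refine ⟨L, ?_⟩
  set c : ℕ → ℂ := fun n => if n.Prime then (n : ℂ) ^ (-s₀) else 0 with hc
  have hterm : ∀ n : ℕ, (Real.log ((n + 2 : ℕ) : ℝ))⁻¹ • b (n + 2) = c (n + 2) := by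
    intro n
    simp only [hb, hc]
    split_ifs with hp
    · rw [LSeries.term_def, if_neg (by omega), auxL,
        ArithmeticFunction.vonMangoldt_apply_prime hp, Complex.cpow_neg, Complex.real_smul,
        Complex.ofReal_inv]
      have : ((Real.log ((n + 2 : ℕ) : ℝ) : ℝ) : ℂ) ≠ 0 := by exact_mod_cast (hpos n).ne'
      field_simp
    · simp
  simp only [hterm] at hL
  have hL2 : Tendsto (fun N => ∑ n ∈ Finset.range N, c n) atTop (nhds L) := by
    rw [← tendsto_add_atTop_iff_nat 2]
    refine hL.congr fun n => ?_
    have e0 : c 0 = 0 := by simp [hc, Nat.not_prime_zero]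
    have e1 : c (0 + 1) = 0 := by simp [hc, Nat.not_prime_one]
    rw [Finset.sum_range_succ' c, Finset.sum_range_succ' (fun k => c (k + 1)), e0, e1, add_zero,
      add_zero]
  have hfl : Tendsto (fun t : ℝ => ⌊t⌋₊ + 1) atTop atTop :=
    (tendsto_add_atTop_nat 1).comp tendsto_nat_floor_atTop
  refine (hL2.comp hfl).congr fun t => ?_
  simp only [Function.comp, primesUpTo, hc, Finset.sum_filter]
end
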